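/- arXiv:2308.10546 — 7 statements merged into one kernel-verified Lean document; each statement's English description precedes it below -/
import Mathlib

section
/- Let G and H be graphs such that H is connected and |V(H)| ≥ s(G). Then R(G,H) ≥ (χ(G) − 1)(|V(H)| − 1) + s(G). -/
open SimpleGraph

/-- `containsCopy F G` : the graph `F` contains a copy of the graph `G` (as a subgraph). -/
def containsCopy {V W : Type*} (F : SimpleGraph V) (G : SimpleGraph W) : Prop :=
  ∃ f : G →g F, Function.Injective f

/-- `arrows N G H` : every red/blue coloring of the edges of `K_N` (given by the graph `R` of
red edges, whose complement is the graph of blue edges) contains a red copy of `G` or a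
blue copy of `H`. -/
def arrows {V W : Type*} (N : ℕ) (G : SimpleGraph V) (H : SimpleGraph W) : Prop :=
  ∀ R : SimpleGraph (Fin N), containsCopy R G ∨ containsCopy Rᶜ H

/-- The Ramsey number `R(G, H)`. -/
noncomputable def ramseyNumber {V W : Type*} (G : SimpleGraph V) (H : SimpleGraph W) : ℕ :=
  sInf { N : ℕ | 0 < N ∧ arrows N G H }

/-- The generalized fan `K₁ + nK_t` : the join of a single vertex (`none`) with `n` disjoint
copies of `K_t`. -/
def genFan (n t : ℕ) : SimpleGraph (Option (Fin n × Fin t)) :=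
  SimpleGraph.fromRel (fun a b =>
    a = none ∨ ∃ p q : Fin n × Fin t, a = some p ∧ b = some q ∧ p.1 = q.1)

/-- A graph `G` is edge-critical if it has an edge `e` with `χ(G - e) = χ(G) - 1`. -/
def EdgeCritical {V : Type*} (G : SimpleGraph V) : Prop :=
  ∃ u v : V, G.Adj u v ∧ (G.deleteEdges {s(u, v)}).chromaticNumber + 1 = G.chromaticNumber

/-- `K_m ⊔ K_{1,ℓ}` : the complete graph on the `m` vertices `some i`, together with one new
vertex `none` joined to exactly the `ℓ` vertices `some i` with `i < ℓ` (for `ℓ ≤ m`). -/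
def KstarK (m ℓ : ℕ) : SimpleGraph (Option (Fin m)) :=
  SimpleGraph.fromRel (fun a b =>
    ((∃ i : Fin m, a = some i) ∧ ∃ j : Fin m, b = some j) ∨
      (a = none ∧ ∃ j : Fin m, b = some j ∧ (j : ℕ) < ℓ))

/-- `starArrows m ℓ G H` : every red/blue coloring of the edges of `K_m ⊔ K_{1,ℓ}` (the red
edges forming a subgraph `R`, the blue edges the remaining edges) contains a red copy of `G`
or a blue copy of `H`. -/
def starArrows {V W : Type*} (m ℓ : ℕ) (G : SimpleGraph V) (H : SimpleGraph W) : Prop :=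
  ∀ R : SimpleGraph (Option (Fin m)), R ≤ KstarK m ℓ →
    containsCopy R G ∨ containsCopy (KstarK m ℓ \ R) H

/-- The star-critical Ramsey number `r₊(G, H)`. -/
noncomputable def starRamsey {V W : Type*} (G : SimpleGraph V) (H : SimpleGraph W) : ℕ :=
  sInf { ℓ : ℕ | starArrows (ramseyNumber G H - 1) ℓ G H }

/-- The chromatic number of `G` as a natural number. -/
noncomputable def chromNum {V : Type*} (G : SimpleGraph V) : ℕ := G.chromaticNumber.toNat

/-- `s(G)` : the minimum size of a color class over all proper `χ(G)`-colorings of `G`. -/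
noncomputable def minClassSize {V : Type*} (G : SimpleGraph V) : ℕ :=
  sInf { m : ℕ | ∃ C : G.Coloring (Fin (chromNum G)), ∃ i : Fin (chromNum G),
    m = {v | C v = i}.ncard }

/-- `τ(G)` : the minimum, over all proper `χ(G)`-colorings of `G` having a color class `U_j`
of size `s(G)`, over all vertices `v ∈ U_j` and all other color classes `U_i`, of the number
of neighbors of `v` in `U_i`. -/
noncomputable def tauNum {V : Type*} (G : SimpleGraph V) : ℕ :=
  sInf { m : ℕ | ∃ C : G.Coloring (Fin (chromNum G)), ∃ j : Fin (chromNum G),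
    {v | C v = j}.ncard = minClassSize G ∧
    ∃ v, C v = j ∧ ∃ i : Fin (chromNum G), i ≠ j ∧ m = {u | C u = i ∧ G.Adj v u}.ncard }

theorem ramsey_cliques (a b : ℕ) : ∃ N : ℕ, ∀ (α : Type) (R : SimpleGraph α) (S : Finset α),
    N ≤ S.card → (∃ T : Finset α, T ⊆ S ∧ T.card = a ∧ ∀ x ∈ T, ∀ y ∈ T, x ≠ y → R.Adj x y) ∨
      (∃ T : Finset α, T ⊆ S ∧ T.card = b ∧ ∀ x ∈ T, ∀ y ∈ T, x ≠ y → Rᶜ.Adj x y) := by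
  classical
  induction a generalizing b with
  | zero => exact ⟨0, fun α R S _ => Or.inl ⟨∅, by simp⟩⟩
  | succ a iha =>
    induction b with
    | zero => exact ⟨0, fun α R S _ => Or.inr ⟨∅, by simp⟩⟩
    | succ b ihb =>
      obtain ⟨N1, h1⟩ := iha (b + 1)
      obtain ⟨N2, h2⟩ := ihb
      refine ⟨N1 + N2 + 1, fun α R S hS => ?_⟩
      obtain ⟨v, hv⟩ : S.Nonempty := Finset.card_pos.mp (by omega)
      have hc := Finset.card_filter_add_card_filter_not (s := S.erase v) (fun x => R.Adj v x)
      rw [Finset.card_erase_of_mem hv] at hc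
      have key : ∀ (Q : SimpleGraph α) (T : Finset α) (k : ℕ), T ⊆ S → T.card = k →
          (∀ x ∈ T, ∀ y ∈ T, x ≠ y → Q.Adj x y) → (∀ x ∈ T, Q.Adj v x) →
          ∃ T : Finset α, T ⊆ S ∧ T.card = k + 1 ∧ ∀ x ∈ T, ∀ y ∈ T, x ≠ y → Q.Adj x y := by
        intro Q T k hT hk hQ hvT
        have hvn : v ∉ T := fun h => Q.loopless.irrefl v (hvT v h)
        refine ⟨insert v T, Finset.insert_subset hv hT, by
          rw [Finset.card_insert_of_notMem hvn, hk], ?_⟩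
        intro x hx y hy hxy
        rcases Finset.mem_insert.mp hx with rfl | hx1 <;> rcases Finset.mem_insert.mp hy with rfl | hy1
        · exact absurd rfl hxy
        · exact hvT y hy1
        · exact (hvT x hx1).symm
        · exact hQ x hx1 y hy1 hxy
      by_cases hN : N1 ≤ ((S.erase v).filter (fun x => R.Adj v x)).card
      · rcases h1 α R _ hN with ⟨T, hT, hk, hQ⟩ | ⟨T, hT, hk, hQ⟩
        · refine Or.inl (key R T a (fun x hx => ?_) hk hQ (fun x hx => ?_))
          · have := hT hx; simp at this; exact this.1.2
          · have := hT hx; simp at this; exact this.2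
        · exact Or.inr ⟨T, fun x hx => by have := hT hx; simp at this; exact this.1.2, hk, hQ⟩
      · have hN' : N2 ≤ ((S.erase v).filter (fun x => ¬ R.Adj v x)).card := by omega
        rcases h2 α R _ hN' with ⟨T, hT, hk, hQ⟩ | ⟨T, hT, hk, hQ⟩
        · exact Or.inl ⟨T, fun x hx => by have := hT hx; simp at this; exact this.1.2, hk, hQ⟩
        · refine Or.inr (key Rᶜ T b (fun x hx => ?_) hk hQ (fun x hx => ?_))
          · have := hT hx; simp at this; exact this.1.2
          · have := hT hx; simp at this
            exact (SimpleGraph.compl_adj _ _ _).mpr ⟨fun h => this.1.1 h.symm, this.2⟩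

theorem containsCopy_of_clique {V α : Type*} [Fintype V] (G : SimpleGraph V) (Q : SimpleGraph α)
    (T : Finset α) (hT : T.card = Fintype.card V)
    (hQ : ∀ x ∈ T, ∀ y ∈ T, x ≠ y → Q.Adj x y) : containsCopy Q G := by
  have e : V ≃ T := Fintype.equivOfCardEq (by simp [hT])
  refine ⟨⟨fun v => (e v : α), ?_⟩, ?_⟩
  · intro x y hxy
    refine hQ _ (e x).2 _ (e y).2 (fun h => hxy.ne (e.injective (Subtype.ext h)))
  · intro x y h
    exact e.injective (Subtype.ext h)

theorem arrows_exists {V W : Type*} [Fintype V] [Fintype W]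
    (G : SimpleGraph V) (H : SimpleGraph W) : ∃ N, 0 < N ∧ arrows N G H := by
  obtain ⟨N, hN⟩ := ramsey_cliques (Fintype.card V) (Fintype.card W)
  refine ⟨N + 1, by omega, fun R => ?_⟩
  rcases hN _ R Finset.univ (by simp) with ⟨T, -, hk, hQ⟩ | ⟨T, -, hk, hQ⟩
  · exact Or.inl (containsCopy_of_clique G R T hk hQ)
  · exact Or.inr (containsCopy_of_clique H _ T hk hQ)

theorem minClassSize_le {V : Type*} (G : SimpleGraph V) (C : G.Coloring (Fin (chromNum G)))
    (i : Fin (chromNum G)) : minClassSize G ≤ {v | C v = i}.ncard :=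
  Nat.sInf_le ⟨C, i, rfl⟩

theorem minClassSize_pos {V : Type*} [Fintype V] (G : SimpleGraph V) (h : 0 < chromNum G) :
    0 < minClassSize G := by
  classical
  obtain ⟨C0⟩ : G.Colorable (chromNum G) := G.colorable_chromaticNumber_of_fintype
  obtain ⟨C, i, hm⟩ := Nat.sInf_mem (s := { m : ℕ | ∃ C : G.Coloring (Fin (chromNum G)),
    ∃ i : Fin (chromNum G), m = {v | C v = i}.ncard }) ⟨_, C0, ⟨0, h⟩, rfl⟩
  change minClassSize G = _ at hm
  by_contra h0
  have h1 : {v | C v = i}.ncard = 0 := by omega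
  rw [Set.ncard_eq_zero (Set.toFinite _)] at h1
  have h2 : ∀ v, C v ≠ i := fun v hv => by
    have : v ∈ {v | C v = i} := hv
    rw [h1] at this; exact this
  let D : G.Coloring {j : Fin (chromNum G) // j ≠ i} :=
    SimpleGraph.Coloring.mk (fun v => ⟨C v, h2 v⟩) (fun {a b} hab hh => C.valid hab (by simpa using hh))
  have h3 := D.colorable.chromaticNumber_le
  have h4 : Fintype.card {j : Fin (chromNum G) // j ≠ i} = chromNum G - 1 := by
    simp [Fintype.card_subtype_compl]
  rw [h4] at h3
  have h5 : chromNum G ≤ chromNum G - 1 := ENat.toNat_le_of_le_coe h3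
  omega

theorem statement_5 {V W : Type*} [Fintype V] [Fintype W]
    (G : SimpleGraph V) (H : SimpleGraph W)
    (hH : H.Connected) (hcard : minClassSize G ≤ Fintype.card W) :
    (chromNum G - 1) * (Fintype.card W - 1) + minClassSize G ≤ ramseyNumber G H := by
  classical
  refine le_csInf (arrows_exists G H) ?_
  rintro N ⟨hN0, hN⟩
  rcases Nat.eq_zero_or_pos (chromNum G) with h0 | hpos
  · have : minClassSize G = 0 := by
      unfold minClassSize
      convert Nat.sInf_empty
      ext m
      simp only [Set.mem_setOf_eq, Set.mem_empty_iff_false, iff_false]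
      rintro ⟨_, i, _⟩
      have := i.2
      omega
    simp [h0, this]
  have hs := minClassSize_pos G hpos
  by_contra hlt
  push Not at hlt
  have hWpos : 0 < Fintype.card W := Fintype.card_pos_iff.mpr hH.nonempty
  rcases Nat.lt_or_ge (Fintype.card W) 2 with hW | hW
  · have : Fintype.card W - 1 = 0 := by omega
    rw [this] at hlt
    omega
  obtain ⟨n, hn⟩ : ∃ n, Fintype.card W = n + 1 := ⟨Fintype.card W - 1, by omega⟩
  obtain ⟨k, hk⟩ : ∃ k, chromNum G = k + 1 := ⟨chromNum G - 1, by omega⟩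
  have hn0 : 0 < n := by omega
  rw [hn, hk] at hlt
  simp only [Nat.add_sub_cancel] at hlt
  let c : Fin N → ℕ := fun i => (i : ℕ) / n
  let R : SimpleGraph (Fin N) :=
    { Adj := fun i j => c i ≠ c j
      symm := ⟨fun i j h => Ne.symm h⟩
      loopless := ⟨fun i h => h rfl⟩ }
  have hclt : ∀ i, c i < chromNum G := by
    intro i
    rw [hk]
    refine (Nat.div_lt_iff_lt_mul hn0).mpr ?_
    have := i.2
    have : (k + 1) * n = k * n + n := by ring
    omega
  rcases hN R with ⟨f, hf⟩ | ⟨f, hf⟩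
  · let C : G.Coloring (Fin (chromNum G)) :=
      SimpleGraph.Coloring.mk (fun v => ⟨c (f v), hclt _⟩) (fun {a b} hab hh => by
        have h1 : c (f a) ≠ c (f b) := f.map_rel hab
        exact h1 (Fin.mk.inj_iff.mp hh))
    have h1 := minClassSize_le G C ⟨k, by omega⟩
    have h2 : {v | C v = ⟨k, by omega⟩}.ncard ≤ (Finset.Ico (k * n) N : Set ℕ).ncard := by
      refine Set.ncard_le_ncard_of_injOn (fun v => (f v : ℕ)) ?_ ?_ (Set.toFinite _)
      · intro v hv
        have hv' : (f v : ℕ) / n = k := Fin.mk.inj_iff.mp hv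
        have := Nat.div_mul_le_self (f v : ℕ) n
        rw [hv'] at this
        simp only [Finset.coe_Ico, Set.mem_Ico]
        exact ⟨this, (f v).2⟩
      · intro a _ b _ hab
        exact hf (Fin.ext hab)
    rw [Set.ncard_coe_finset, Nat.card_Ico] at h2
    omega
  · have hadj : ∀ a b, H.Adj a b → c (f a) = c (f b) := by
      intro a b hab
      have h1 := f.map_rel hab
      rw [SimpleGraph.compl_adj] at h1
      exact not_not.mp h1.2
    have hwalk : ∀ a b, H.Walk a b → c (f a) = c (f b) := by
      intro a b p
      induction p with
      | nil => rfl
      | cons h _ ih => exact (hadj _ _ h).trans ih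
    obtain ⟨w⟩ := hH.nonempty
    have hall : ∀ a, c (f a) = c (f w) := fun a => by
      obtain ⟨p⟩ := hH.preconnected a w
      exact hwalk _ _ p
    have h2 : Fintype.card W ≤ (Finset.Ico (c (f w) * n) (c (f w) * n + n)).card := by
      refine Finset.card_le_card_of_injOn (s := Finset.univ) (fun v => (f v : ℕ)) ?_ ?_
      · intro v _
        have hv' : (f v : ℕ) / n = c (f w) := hall v
        have h3 := Nat.div_add_mod (f v : ℕ) n
        have h4 := Nat.mod_lt (f v : ℕ) hn0
        rw [hv', mul_comm] at h3
        simp only [Finset.coe_Ico, Set.mem_Ico]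
        omega
      · intro a _ b _ hab
        exact hf (Fin.ext hab)
    rw [Nat.card_Ico] at h2
    omega
end

section
/- Let G and H be graphs and let n be a positive integer. Then R(G, nH) ≤ (n − 1)·|V(H)| + R(G, H), where nH denotes the disjoint union of n copies of H. -/
open SimpleGraph

/-- `nCopies n H` : the disjoint union of `n` vertex-disjoint copies of `H`. -/
def nCopies (n : ℕ) {W : Type*} (H : SimpleGraph W) : SimpleGraph (Fin n × W) :=
  SimpleGraph.fromRel (fun a b => a.1 = b.1 ∧ H.Adj a.2 b.2)

theorem copies_step {V W : Type*} [Fintype W]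
    (G : SimpleGraph V) (H : SimpleGraph W) (N M n : ℕ) (h : arrows N G H)
    (hM : n * Fintype.card W + N ≤ M) (R : SimpleGraph (Fin M)) (hR : ¬ containsCopy R G)
    (hk : containsCopy Rᶜ (nCopies n H)) : containsCopy Rᶜ (nCopies (n + 1) H) := by
  classical
  obtain ⟨f, hf⟩ := hk
  let S : Finset (Fin M) := (Finset.univ.image f)ᶜ
  have hS : N ≤ S.card := by
    have : (Finset.univ.image f).card = n * Fintype.card W := by
      rw [Finset.card_image_of_injective _ hf]; simp
    simp only [S, Finset.card_compl, Fintype.card_fin, this]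
    omega
  obtain ⟨e⟩ : Nonempty (Fin N ↪ S) := by
    apply Function.Embedding.nonempty_of_card_le
    simpa using hS
  let e' : Fin N → Fin M := fun i => (e i).1
  have he' : Function.Injective e' := fun a b hab => e.injective (Subtype.ext hab)
  have hdisj : ∀ i p, e' i ≠ f p := by
    intro i p hip
    have := (e i).2
    simp only [S, Finset.mem_compl, Finset.mem_image, Finset.mem_univ, true_and, not_exists] at this
    exact this p hip.symm
  rcases h (R.comap e') with ⟨g, hg⟩ | ⟨g, hg⟩
  · exact absurd ⟨⟨fun v => e' (g v), fun hab => g.map_rel hab⟩, he'.comp hg⟩ hR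
  · have hgadj : ∀ a b, H.Adj a b → Rᶜ.Adj (e' (g a)) (e' (g b)) := by
      intro a b hab
      have := g.map_rel hab
      rw [SimpleGraph.compl_adj] at this ⊢
      exact ⟨fun hh => this.1 (he' hh), fun hh => this.2 hh⟩
    have hfadj : ∀ (i : Fin n) a b, H.Adj a b → Rᶜ.Adj (f (i, a)) (f (i, b)) := by
      intro i a b hab
      apply f.map_rel
      simp [nCopies, hab, hab.ne]
    let F : Fin (n + 1) × W → Fin M := fun p =>
      Fin.lastCases (motive := fun _ => Fin M) (e' (g p.2)) (fun i => f (i, p.2)) p.1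
    have F1 : ∀ w, F (Fin.last n, w) = e' (g w) := fun w => by simp [F]
    have F2 : ∀ i w, F (Fin.castSucc i, w) = f (i, w) := fun i w => by simp [F]
    have key : ∀ i a b, H.Adj a b → Rᶜ.Adj (F (i, a)) (F (i, b)) := by
      intro i a b hab
      induction i using Fin.lastCases with
      | last => rw [F1, F1]; exact hgadj a b hab
      | cast i => rw [F2, F2]; exact hfadj i a b hab
    refine ⟨⟨F, ?_⟩, ?_⟩
    · rintro ⟨i, a⟩ ⟨j, b⟩ hab
      simp only [nCopies, SimpleGraph.fromRel_adj] at hab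
      rcases hab.2 with ⟨rfl, hh⟩ | ⟨rfl, hh⟩
      · exact key _ _ _ hh
      · exact (key _ _ _ hh).symm
    · rintro ⟨i, a⟩ ⟨j, b⟩ hab
      change F (i, a) = F (j, b) at hab
      induction i using Fin.lastCases with
      | last =>
        induction j using Fin.lastCases with
        | last => rw [F1, F1] at hab; rw [hg (he' hab)]
        | cast j => rw [F1, F2] at hab; exact absurd hab (hdisj _ _)
      | cast i =>
        induction j using Fin.lastCases with
        | last => rw [F1, F2] at hab; exact absurd hab.symm (hdisj _ _)
        | cast j =>
          rw [F2, F2] at hab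
          have := hf hab
          simp only [Prod.mk.injEq] at this
          rw [this.1, this.2]

theorem arrows_copies {V W : Type*} [Fintype W]
    (G : SimpleGraph V) (H : SimpleGraph W) (n N : ℕ) (hn : 0 < n) (h : arrows N G H) :
    arrows ((n - 1) * Fintype.card W + N) G (nCopies n H) := by
  intro R
  by_cases hR : containsCopy R G
  · exact Or.inl hR
  right
  have key : ∀ k, k ≤ n → containsCopy Rᶜ (nCopies k H) := by
    intro k
    induction k with
    | zero =>
      intro _
      exact ⟨⟨fun p => p.1.elim0, fun {a} => a.1.elim0⟩, fun a => a.1.elim0⟩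
    | succ k ih =>
      intro hk
      refine copies_step G H N _ k h ?_ R hR (ih (by omega))
      have : k * Fintype.card W ≤ (n - 1) * Fintype.card W :=
        Nat.mul_le_mul_right _ (by omega)
      omega
  exact key n le_rfl

theorem arrows_of_copies {V W : Type*}
    (G : SimpleGraph V) (H : SimpleGraph W) (n N : ℕ) (hn : 0 < n)
    (h : arrows N G (nCopies n H)) : arrows N G H := by
  intro R
  rcases h R with h | ⟨f, hf⟩
  · exact Or.inl h
  · refine Or.inr ⟨⟨fun w => f (⟨0, hn⟩, w), fun {a b} hab => f.map_rel ?_⟩, ?_⟩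
    · simp [nCopies, hab, hab.ne]
    · intro a b hab
      exact congrArg Prod.snd (hf hab)

theorem statement_6 {V W : Type*} [Fintype V] [Fintype W]
    (G : SimpleGraph V) (H : SimpleGraph W) (n : ℕ) (hn : 0 < n) :
    ramseyNumber G (nCopies n H) ≤ (n - 1) * Fintype.card W + ramseyNumber G H := by
  rcases Set.eq_empty_or_nonempty { N : ℕ | 0 < N ∧ arrows N G H } with he | hne
  · have : { N : ℕ | 0 < N ∧ arrows N G (nCopies n H) } = ∅ := by
      rw [Set.eq_empty_iff_forall_notMem] at he ⊢
      exact fun N hN => he N ⟨hN.1, arrows_of_copies G H n N hn hN.2⟩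
    unfold ramseyNumber
    rw [this]
    simp
  · have hmem := Nat.sInf_mem hne
    exact Nat.sInf_le ⟨Nat.add_pos_right _ hmem.1, arrows_copies G H n _ hn hmem.2⟩
end

section
/- Let G be an edge-critical graph. Then τ(G) = 1. -/
open SimpleGraph

theorem aux_avoid {V : Type*} (G : SimpleGraph V) (n : ℕ) (C : G.Coloring (Fin (n+1)))
    (j : Fin (n+1)) (h : ∀ v, C v ≠ j) : G.Colorable n := by
  have C' : G.Coloring {x : Fin (n+1) // x ≠ j} :=
    Coloring.mk (fun v => ⟨C v, h v⟩) (by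
      intro a b hab heq
      exact C.valid hab (congrArg Subtype.val heq))
  have := C'.colorable
  simpa using this

theorem statement_11 {V : Type*} [Fintype V] (G : SimpleGraph V)
    (hcrit : EdgeCritical G) : tauNum G = 1 := by
  classical
  obtain ⟨u, v, huv, hχ⟩ := hcrit
  set H := G.deleteEdges {s(u, v)} with hH
  obtain ⟨n, hn⟩ : ∃ n : ℕ, H.chromaticNumber = n := by
    have h1 : H.chromaticNumber ≠ ⊤ :=
      chromaticNumber_ne_top_iff_exists.2 ⟨_, H.colorable_of_fintype⟩
    exact ⟨_, (ENat.coe_toNat h1).symm⟩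
  have hG : G.chromaticNumber = ((n + 1 : ℕ) : ℕ∞) := by
    rw [← hχ, hn]; rfl
  have hk : chromNum G = n + 1 := by
    unfold chromNum; rw [hG]; rfl
  have hnc : ¬ G.Colorable n := by
    intro h
    have h2 := h.chromaticNumber_le
    rw [hG] at h2
    have : n + 1 ≤ n := by exact_mod_cast h2
    omega
  have hHc : H.Colorable n := chromaticNumber_le_iff_colorable.1 hn.le
  obtain ⟨c⟩ := hHc
  have hHadj : ∀ a b, G.Adj a b → a ≠ u → b ≠ u → H.Adj a b := by
    intro a b hab ha hb
    rw [hH, deleteEdges_adj]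
    refine ⟨hab, ?_⟩
    simp only [Set.mem_singleton_iff, Sym2.eq_iff]
    tauto
  have hHadj2 : ∀ b, G.Adj u b → b ≠ v → H.Adj u b := by
    intro b hab hb
    rw [hH, deleteEdges_adj]
    refine ⟨hab, ?_⟩
    simp only [Set.mem_singleton_iff, Sym2.eq_iff]
    rintro (⟨_, h⟩ | ⟨h, _⟩)
    · exact hb h
    · exact huv.ne h
  have hcuv : c u = c v := by
    by_contra hne
    apply hnc
    refine ⟨Coloring.mk c ?_⟩
    intro a b hab heq
    by_cases ha : a = u
    · subst ha
      by_cases hb : b = v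
      · subst hb; exact hne heq
      · exact c.valid (hHadj2 b hab hb) heq
    · by_cases hb : b = u
      · subst hb
        by_cases ha' : a = v
        · subst ha'; exact hne heq.symm
        · exact c.valid (hHadj2 a hab.symm ha') heq.symm
      · exact c.valid (hHadj a b hab ha hb) heq
  -- the good coloring
  let C : G.Coloring (Fin (n+1)) :=
    Coloring.mk (fun x => if x = u then Fin.last n else (c x).castSucc) (by
      intro a b hab heq
      by_cases ha : a = u
      · have hb : b ≠ u := fun h => hab.ne (ha.trans h.symm)
        simp only [ha, hb, if_true, if_false] at heq
        exact (Fin.castSucc_lt_last _).ne heq.symm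
      · by_cases hb : b = u
        · simp only [ha, hb, if_true, if_false] at heq
          exact (Fin.castSucc_lt_last _).ne heq
        · simp only [ha, hb, if_false] at heq
          exact c.valid (hHadj a b hab ha hb) (Fin.castSucc_injective _ heq))
  have hCu : C u = Fin.last n := if_pos rfl
  have hCx : ∀ x, x ≠ u → C x = (c x).castSucc := fun x hx => if_neg hx
  have hclass : {x | C x = Fin.last n} = {u} := by
    ext x
    simp only [Set.mem_setOf_eq, Set.mem_singleton_iff]
    constructor
    · intro h
      by_contra hx
      rw [hCx x hx] at h
      exact (Fin.castSucc_lt_last _).ne h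
    · rintro rfl; exact hCu
  have hs : minClassSize G = 1 := by
    unfold minClassSize
    rw [hk]
    apply le_antisymm
    · exact Nat.sInf_le ⟨C, Fin.last n, by rw [hclass, Set.ncard_singleton]⟩
    · apply le_csInf
      · exact ⟨1, C, Fin.last n, by rw [hclass, Set.ncard_singleton]⟩
      · rintro m ⟨D, i, rfl⟩
        rw [Nat.one_le_iff_ne_zero]
        intro h0
        rw [Set.ncard_eq_zero (Set.toFinite _)] at h0
        exact hnc (aux_avoid G n D i fun x hx => by
          have : x ∈ {v | D v = i} := hx
          rw [h0] at this; exact this)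
  unfold tauNum
  rw [hs, hk]
  have hmem : 1 ∈ { m : ℕ | ∃ C : G.Coloring (Fin (n+1)), ∃ j : Fin (n+1),
    {v | C v = j}.ncard = 1 ∧
    ∃ v, C v = j ∧ ∃ i : Fin (n+1), i ≠ j ∧ m = {u | C u = i ∧ G.Adj v u}.ncard } := by
    refine ⟨C, Fin.last n, by rw [hclass, Set.ncard_singleton], u, hCu, (c v).castSucc,
      (Fin.castSucc_lt_last _).ne, ?_⟩
    have : {x | C x = (c v).castSucc ∧ G.Adj u x} = {v} := by
      ext x
      simp only [Set.mem_setOf_eq, Set.mem_singleton_iff]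
      constructor
      · rintro ⟨h1, h2⟩
        by_contra hx
        rw [hCx x h2.ne'] at h1
        exact c.valid (hHadj2 x h2 hx) (hcuv.trans (Fin.castSucc_injective _ h1).symm)
      · rintro rfl; exact ⟨hCx _ huv.ne', huv⟩
    rw [this, Set.ncard_singleton]
  apply le_antisymm
  · exact Nat.sInf_le hmem
  · apply le_csInf ⟨1, hmem⟩
    rintro m ⟨D, j, hj, w, hw, i, hij, rfl⟩
    rw [Nat.one_le_iff_ne_zero]
    intro h0
    rw [Set.ncard_eq_zero (Set.toFinite _)] at h0
    obtain ⟨z, hz⟩ := Set.ncard_eq_one.1 hj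
    have hall : ∀ x, D x = j → x = w := by
      intro x hx
      have h1 : x ∈ {v | D v = j} := hx
      have h2 : w ∈ {v | D v = j} := hw
      rw [hz] at h1 h2
      exact h1.trans h2.symm
    have hno : ∀ x, G.Adj w x → D x ≠ i := by
      intro x hx hxi
      have : x ∈ {u | D u = i ∧ G.Adj w u} := ⟨hxi, hx⟩
      rw [h0] at this; exact this
    apply hnc
    refine aux_avoid G n (Coloring.mk (fun x => if x = w then i else D x) ?_) j ?_
    · intro a b hab heq
      by_cases ha : a = w
      · have hb : b ≠ w := fun h => hab.ne (ha.trans h.symm)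
        simp only [ha, hb, if_true, if_false] at heq
        exact hno b (ha ▸ hab) heq.symm
      · by_cases hb : b = w
        · simp only [ha, hb, if_true, if_false] at heq
          exact hno a (hb ▸ hab.symm) heq
        · simp only [ha, hb, if_false] at heq
          exact D.valid hab heq
    · intro x
      change (if x = w then i else D x) ≠ j
      split_ifs with hx
      · exact hij
      · exact fun h => hx (hall x h)
end

section
/- Let G be a graph with χ(G) = p + 1. For every ξ > 0 there exist δ = δ(ξ) > 0 and n₀ = n₀(δ) > 0 such that: if H is a graph of order N > n₀ with more than (p−1)N²/(2p) − δN² edges that does not contain G as a subgraph, then there is a partition of V(H) into classes V₁, …, V_p such that (1) Σ_{1≤i<j≤p} (|V_i||V_j| − e_H(V_i,V_j)) < ξN², where e_H(V_i,V_j) is the number of edges of H with one end in V_i and the other in V_j; (2) Σ_{i=1}^{p} e_H(V_i) < ξN², where e_H(V_i) is the number of edges of H with both ends in V_i; (3) for every vertex v ∈ V_i and all i, j ∈ {1,…,p}, the number of neighbors of v in V_i is at most the number of neighbors of v in V_j; and (4) N/p − ξN < |V_i| < N/p + ξN for each i ∈ {1,…,p}. -/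
open SimpleGraph

/-- `crossEdges H A B` : the number of edges of `H` with one endpoint in `A` and the
other endpoint in `B` (for `A = B`, the number of edges with both endpoints in `A`). -/
noncomputable def crossEdges {N : ℕ} (H : SimpleGraph (Fin N)) (A B : Set (Fin N)) : ℕ :=
  {e : Sym2 (Fin N) | e ∈ H.edgeSet ∧ ∃ u ∈ A, ∃ v ∈ B, e = s(u, v)}.ncard

namespace Stab
open Finset Classical

variable {V : Type} 

noncomputable def dg (H : SimpleGraph V) (S : Finset V) (v : V) : ℕ := #{w ∈ S | H.Adj v w}

noncomputable def e2 (H : SimpleGraph V) (S : Finset V) : ℕ := ∑ u ∈ S, dg H S u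

lemma dg_erase (H : SimpleGraph V) (S : Finset V) (v u : V) (hv : v ∈ S) :
    dg H S u = dg H (S.erase v) u + if H.Adj u v then 1 else 0 := by
  unfold dg
  rw [Finset.card_filter, Finset.card_filter, ← Finset.sum_erase_add _ _ hv]

lemma e2_erase (H : SimpleGraph V) (S : Finset V) (v : V) (hv : v ∈ S) :
    e2 H S = e2 H (S.erase v) + 2 * dg H S v := by
  have h1 : dg H S v = ∑ u ∈ S.erase v, if H.Adj u v then 1 else 0 := by
    rw [dg_erase H S v v hv]
    unfold dg
    rw [Finset.card_filter]
    simp [H.adj_comm]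
  unfold e2
  rw [← Finset.sum_erase_add _ _ hv, Finset.sum_congr rfl (fun u _ => dg_erase H S v u hv),
    Finset.sum_add_distrib, ← h1]
  ring

lemma dg_le (H : SimpleGraph V) (S : Finset V) (v : V) : dg H S v ≤ #S := Finset.card_filter_le _ _

lemma e2_le (H : SimpleGraph V) (S : Finset V) : e2 H S ≤ #S * #S := by
  unfold e2
  calc _ ≤ ∑ u ∈ S, #S := Finset.sum_le_sum (fun u _ => dg_le H S u)
    _ = _ := by simp

/-- maximize the potential -/
lemma potential (H : SimpleGraph V) (T : Finset V) (α : ℝ) :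
    ∃ S ⊆ T, (∀ v ∈ S, α * #S ≤ dg H S v) ∧
      (e2 H T : ℝ) - α * (#T * (#T + 1)) ≤ e2 H S - α * (#S * (#S + 1)) := by
  obtain ⟨S, hS, hmax⟩ := Finset.exists_max_image T.powerset
    (fun S => (e2 H S : ℝ) - α * (#S * (#S + 1))) ⟨T, by simp⟩
  refine ⟨S, by simpa using hS, fun v hv => ?_, hmax T (by simp)⟩
  have h := hmax (S.erase v) (by
    simp only [mem_powerset] at hS ⊢; exact (Finset.erase_subset _ _).trans hS)
  have h2 := e2_erase H S v hv
  have h3 : (#(S.erase v) : ℝ) = #S - 1 := by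
    rw [← Finset.card_erase_add_one hv]; push_cast; ring
  simp only [h2, h3] at h
  push_cast at h
  linarith

def HasK (H : SimpleGraph V) (S : Finset V) (r t : ℕ) : Prop :=
  ∃ P : Fin r → Finset V, (∀ i, P i ⊆ S ∧ #(P i) = t) ∧
    ∀ i j, i ≠ j → ∀ u ∈ P i, ∀ v ∈ P j, H.Adj u v

lemma HasK.mk' (H : SimpleGraph V) (S : Finset V) (r t : ℕ)
    (P : Fin r → Finset V) (h : ∀ i, P i ⊆ S ∧ t ≤ #(P i))
    (h2 : ∀ i j, i ≠ j → ∀ u ∈ P i, ∀ v ∈ P j, H.Adj u v) : HasK H S r t := by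
  choose Q hQ hQc using fun i => Finset.exists_subset_card_eq (h i).2
  exact ⟨Q, fun i => ⟨(hQ i).trans (h i).1, hQc i⟩,
    fun i j hij u hu v hv => h2 i j hij u (hQ i hu) v (hQ j hv)⟩

lemma HasK.mono {H : SimpleGraph V} {S T : Finset V} (hST : S ⊆ T) {r t : ℕ}
    (h : HasK H S r t) : HasK H T r t := by
  obtain ⟨P, h1, h2⟩ := h
  exact ⟨P, fun i => ⟨(h1 i).1.trans hST, (h1 i).2⟩, h2⟩

lemma erdosStone {ε : ℝ} (hε : 0 < ε) (r t : ℕ) : ∃ n₀ : ℕ, ∀ (V : Type) (H : SimpleGraph V)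
    (S : Finset V), n₀ ≤ #S → (∀ v ∈ S, (1 - 1 / r + ε) * #S ≤ dg H S v) →
    HasK H S (r + 1) t := by
  obtain ⟨n₀, hn₀⟩ := Filter.eventually_atTop.mp
    (SimpleGraph.eventually_completeEquipartiteGraph_isContained_of_minDegree hε r t)
  refine ⟨n₀ + 1, fun V H S hS hdeg => ?_⟩
  let e := S.equivFin.symm
  let G' : SimpleGraph (Fin #S) := H.comap (fun a => (e a : V))
  have hd : ∀ a, G'.degree a = dg H S (e a) := by
    intro a
    unfold dg
    rw [← SimpleGraph.card_neighborFinset_eq_degree]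
    refine Finset.card_bij (fun b _ => (e b : V)) ?_ ?_ ?_
    · intro b hb
      simp only [SimpleGraph.mem_neighborFinset] at hb
      simp only [mem_filter]
      exact ⟨(e b).2, hb⟩
    · intro b _ b' _ h
      exact e.injective (Subtype.ext h)
    · intro w hw
      simp only [mem_filter] at hw
      refine ⟨e.symm ⟨w, hw.1⟩, ?_, by simp⟩
      simp only [SimpleGraph.mem_neighborFinset]
      change H.Adj _ _
      simpa using hw.2
  have hne : Nonempty (Fin #S) := ⟨⟨0, by omega⟩⟩
  have hmin : (G'.minDegree : ℝ) ≥ (1 - 1 / r + ε) * (#S : ℕ) := by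
    obtain ⟨v, hv⟩ := G'.exists_minimal_degree_vertex
    rw [hv, hd]
    exact hdeg _ (e v).2
  obtain ⟨f⟩ := hn₀ #S (by omega) hmin
  refine ⟨fun i => Finset.univ.image (fun a => (e (f (i, a)) : V)), fun i => ⟨?_, ?_⟩, ?_⟩
  · intro x hx
    simp only [mem_image, mem_univ, true_and] at hx
    obtain ⟨a, rfl⟩ := hx
    exact (e _).2
  · rw [Finset.card_image_of_injective]
    · simp
    · intro a b hab
      have := f.injective (e.injective (Subtype.ext hab))
      simpa using this
  · intro i j hij u hu v hv
    simp only [mem_image, mem_univ, true_and] at hu hv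
    obtain ⟨a, rfl⟩ := hu
    obtain ⟨b, rfl⟩ := hv
    have : (SimpleGraph.completeEquipartiteGraph (r+1) t).Adj (i, a) (j, b) := by
      rw [SimpleGraph.completeEquipartiteGraph_adj]; exact hij
    exact f.toHom.map_adj this

/-- edge version -/
lemma edgeBound {η : ℝ} (hη : 0 < η) (r t : ℕ) : ∃ C : ℝ, 0 ≤ C ∧
    ∀ (V : Type) (H : SimpleGraph V) (S : Finset V), ¬ HasK H S (r + 1) t →
    (e2 H S : ℝ) ≤ (1 - 1 / r + η) * (#S * (#S + 1)) + C := by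
  obtain ⟨n₀, hn₀⟩ := erdosStone hη r t
  refine ⟨n₀ * n₀, by positivity, fun V H T hT => ?_⟩
  obtain ⟨S, hST, hdeg, hpot⟩ := potential H T (1 - 1 / r + η)
  have hlt : #S < n₀ := by
    by_contra hcon
    exact hT ((hn₀ V H S (by omega) hdeg).mono hST)
  have h1 : (e2 H S : ℝ) ≤ n₀ * n₀ := by
    exact_mod_cast (e2_le H S).trans (Nat.mul_le_mul hlt.le hlt.le)
  have h2 : 0 ≤ (1 - 1 / (r:ℝ) + η) * (#S * (#S + 1)) := by
    have : 1 / (r:ℝ) ≤ 1 := by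
      rcases Nat.eq_zero_or_pos r with h | h
      · simp [h]
      · rw [div_le_one (by positivity)]; exact_mod_cast h
    have : 0 ≤ 1 - 1 / (r:ℝ) + η := by linarith
    positivity
  linarith

end Stab
namespace Stab
open Finset Classical

variable {V : Type} 

lemma dg_double (H : SimpleGraph V) (S P : Finset V) :
    ∑ v ∈ S, dg H P v = ∑ u ∈ P, dg H S u := by
  unfold dg
  simp only [Finset.card_filter]
  rw [Finset.sum_comm]
  simp only [H.adj_comm]

lemma few_full (H : SimpleGraph V) (S : Finset V) (p s t : ℕ)
    (hfree : ¬ HasK H S (p + 1) s) (P : Fin p → Finset V) (hP : ∀ i, P i ⊆ S ∧ #(P i) = t)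
    (hadj : ∀ i j, i ≠ j → ∀ u ∈ P i, ∀ v ∈ P j, H.Adj u v) :
    #{v ∈ S | ∀ i, s ≤ dg H (P i) v} ≤ 2 ^ (p * t) * s := by
  by_contra! hcon
  let K : Finset V := Finset.univ.biUnion P
  have hK : #K ≤ p * t := by
    have := Finset.card_biUnion_le_card_mul (Finset.univ : Finset (Fin p)) P t
      (fun i _ => (hP i).2.le)
    simpa using this
  have hlt : #K.powerset * s < #{v ∈ S | ∀ i, s ≤ dg H (P i) v} := by
    refine lt_of_le_of_lt ?_ hcon
    rw [Finset.card_powerset]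
    exact Nat.mul_le_mul_right _ (Nat.pow_le_pow_right (by norm_num) hK)
  obtain ⟨y, hy, hfib⟩ := Finset.exists_lt_card_fiber_of_mul_lt_card_of_maps_to
    (f := fun v => {w ∈ K | H.Adj v w}) (t := K.powerset)
    (fun v _ => by simp [Finset.filter_subset]) hlt
  set F := {x ∈ {v ∈ S | ∀ i, s ≤ dg H (P i) v} | {w ∈ K | H.Adj x w} = y} with hF
  apply hfree
  have hFy : ∀ v ∈ F, ∀ w ∈ y, H.Adj v w := by
    intro v hv w hw
    simp only [hF, mem_filter] at hv
    rw [← hv.2] at hw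
    exact (mem_filter.mp hw).2
  refine HasK.mk' H S (p+1) s (Fin.cons F (fun i => {w ∈ P i | w ∈ y})) ?_ ?_
  · intro i
    refine Fin.cases ?_ (fun i => ?_) i
    · simp only [Fin.cons_zero]
      refine ⟨?_, hfib.le⟩
      intro x hx
      simp only [hF, mem_filter] at hx
      exact hx.1.1
    · simp only [Fin.cons_succ]
      refine ⟨(Finset.filter_subset _ _).trans (hP i).1, ?_⟩
      obtain ⟨v, hv⟩ : F.Nonempty := Finset.card_pos.mp (by omega)
      have hv' := hv
      simp only [hF, mem_filter] at hv'
      refine (hv'.1.2 i).trans (Finset.card_le_card ?_)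
      intro w hw
      simp only [mem_filter] at hw ⊢
      refine ⟨hw.1, ?_⟩
      rw [← hv'.2]
      simp only [mem_filter, K, mem_biUnion, mem_univ, true_and]
      exact ⟨⟨i, hw.1⟩, hw.2⟩
  · intro i j
    refine Fin.cases ?_ (fun i => ?_) i <;> refine Fin.cases ?_ (fun j => ?_) j
    · simp
    · intro _ u hu v hv
      simp only [Fin.cons_zero, Fin.cons_succ, mem_filter] at hu hv
      exact hFy u hu v hv.2
    · intro _ u hu v hv
      simp only [Fin.cons_zero, Fin.cons_succ, mem_filter] at hu hv
      exact (hFy v hv u hu.2).symm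
    · intro hij u hu v hv
      simp only [Fin.cons_succ, mem_filter] at hu hv
      exact hadj i j (fun h => hij (by rw [h])) u hu.1 v hv.1

lemma no_bip (H : SimpleGraph V) (S : Finset V) (p s q : ℕ) (hq : 1 ≤ q)
    (hfree : ¬ HasK H S (p + 1) s) (P : Fin p → Finset V)
    (hP : ∀ i, P i ⊆ S ∧ #(P i) = 4 * s * q)
    (hadj : ∀ i j, i ≠ j → ∀ u ∈ P i, ∀ v ∈ P j, H.Adj u v)
    (X : Finset V) (hX : X ⊆ S) (i : Fin p)
    (hXi : ∀ v ∈ X, ∀ j, j ≠ i → 4 * s * q < dg H (P j) v + q) : ¬ HasK H X 2 s := by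
  rintro ⟨A, hA, hAA⟩
  apply hfree
  let Y := A 0 ∪ A 1
  have hYX : Y ⊆ X := Finset.union_subset (hA 0).1 (hA 1).1
  have hY : #Y ≤ 2 * s := by
    refine (Finset.card_union_le _ _).trans ?_
    rw [(hA 0).2, (hA 1).2]; omega
  let Q : Fin p → Finset V := fun j => {x ∈ P j | ∀ u ∈ Y, H.Adj u x}
  have hQ : ∀ j, j ≠ i → s ≤ #(Q j) := by
    intro j hj
    have h1 : #(P j \ Q j) ≤ #Y * q := by
      have hsub : P j \ Q j ⊆ Y.biUnion (fun u => {x ∈ P j | ¬ H.Adj u x}) := by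
        intro x hx
        simp only [Q, mem_sdiff, mem_filter, not_and, not_forall] at hx
        obtain ⟨u, hu, hux⟩ := hx.2 hx.1
        simp only [mem_biUnion, mem_filter]
        exact ⟨u, hu, hx.1, hux⟩
      refine (Finset.card_le_card hsub).trans (Finset.card_biUnion_le_card_mul _ _ _ ?_)
      intro u hu
      have h2 := Finset.card_filter_add_card_filter_not (s := P j) (fun x => H.Adj u x)
      have h3 := hXi u (hYX hu) j hj
      unfold dg at h3
      rw [(hP j).2] at h2
      omega
    have h4 := Finset.card_sdiff_add_card_eq_card (Finset.filter_subset (fun x => ∀ u ∈ Y, H.Adj u x) (P j))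
    change #(P j \ Q j) + #(Q j) = _ at h4
    rw [(hP j).2] at h4
    have h5 : #Y * q ≤ 2 * s * q := Nat.mul_le_mul_right _ hY
    have h6 : s * 1 ≤ s * q := Nat.mul_le_mul_left _ hq
    nlinarith
  have hYQ : ∀ j, ∀ u ∈ Y, ∀ x ∈ Q j, H.Adj u x := by
    intro j u hu x hx
    exact (mem_filter.mp hx).2 u hu
  have h0Y : ∀ u ∈ A 0, u ∈ Y := fun u hu => Finset.mem_union_left _ hu
  have h1Y : ∀ u ∈ A 1, u ∈ Y := fun u hu => Finset.mem_union_right _ hu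
  refine HasK.mk' H S (p+1) s (Fin.cons (A 0) (fun j => if j = i then A 1 else Q j)) ?_ ?_
  · intro j
    refine Fin.cases ?_ (fun j => ?_) j
    · exact ⟨(hA 0).1.trans hX, (hA 0).2.ge⟩
    · simp only [Fin.cons_succ]
      split_ifs with h
      · exact ⟨(hA 1).1.trans hX, (hA 1).2.ge⟩
      · exact ⟨(Finset.filter_subset _ _).trans (hP j).1, hQ j h⟩
  · have key : ∀ j, ∀ u ∈ A 0, ∀ v ∈ (if j = i then A 1 else Q j), H.Adj u v := by
      intro j u hu v hv
      split_ifs at hv with h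
      · exact hAA 0 1 (by simp) u hu v hv
      · exact hYQ j u (h0Y u hu) v hv
    intro j k
    refine Fin.cases ?_ (fun j => ?_) j <;> refine Fin.cases ?_ (fun k => ?_) k
    · simp
    · intro _ u hu v hv
      simp only [Fin.cons_zero, Fin.cons_succ] at hu hv
      exact key k u hu v hv
    · intro _ u hu v hv
      simp only [Fin.cons_zero, Fin.cons_succ] at hu hv
      exact (key j v hv u hu).symm
    · intro hjk u hu v hv
      have hjk' : j ≠ k := fun h => hjk (by rw [h])
      simp only [Fin.cons_succ] at hu hv
      split_ifs at hu hv with h1 h2 h2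
      · exact absurd (h1.trans h2.symm) hjk'
      · exact hYQ k u (h1Y u hu) v hv
      · exact (hYQ j v (h1Y v hv) u hu).symm
      · exact hadj j k hjk' u (mem_filter.mp hu).1 v (mem_filter.mp hv).1

lemma struct (H : SimpleGraph V) (S : Finset V) (p s q : ℕ) (hp : 1 ≤ p) (hs : 1 ≤ s)
    (hq : 1 ≤ q) (ε : ℝ)
    (hfree : ¬ HasK H S (p + 1) s) (hK : HasK H S p (4 * s * q))
    (hdeg : ∀ v ∈ S, (1 - 1 / p - ε) * #S ≤ dg H S v) :
    ∃ W ⊆ S, ∃ c : V → Fin p, (∀ i, ¬ HasK H {v ∈ W | c v = i} 2 s) ∧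
      (#(S \ W) : ℝ) * q ≤ #S * (4 * s * q) * p * ε + #S * s +
        (2 ^ (p * (4 * s * q)) * s) * (2 * (4 * s * q)) := by
  obtain ⟨P, hP, hadj⟩ := hK
  set t := 4 * s * q with ht
  have hL := few_full H S p s t hfree P hP hadj
  set L := {v ∈ S | ∀ i, s ≤ dg H (P i) v} with hLdef
  let good : V → Fin p → Prop := fun v i => dg H (P i) v < s ∧ ∀ j, j ≠ i → t < dg H (P j) v + q
  let W := {v ∈ S | ∃ i, good v i}
  let c : V → Fin p := fun v => if h : ∃ i, good v i then h.choose else ⟨0, hp⟩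
  have hc : ∀ v ∈ W, good v (c v) := by
    intro v hv
    have h := (mem_filter.mp hv).2
    simp only [c, dif_pos h]
    exact h.choose_spec
  refine ⟨W, Finset.filter_subset _ _, c, ?_, ?_⟩
  · intro i
    refine no_bip H S p s q hq hfree P hP hadj _
      ((Finset.filter_subset _ _).trans (Finset.filter_subset _ _)) i ?_
    intro v hv j hj
    rw [mem_filter] at hv
    have := (hc v hv.1).2 j (by rw [hv.2]; exact hj)
    exact this
  · have hale : ∀ v i, dg H (P i) v ≤ t := fun v i => (dg_le H (P i) v).trans (hP i).2.le
    let B := (S \ W) \ L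
    have hcard : #(S \ W) ≤ #B + #L := by
      have := Finset.card_le_card (show S \ W ⊆ B ∪ L by
        intro x hx
        by_cases h : x ∈ L
        · exact mem_union_right _ h
        · exact mem_union_left _ (mem_sdiff.mpr ⟨hx, h⟩))
      exact this.trans (Finset.card_union_le _ _)
    -- pointwise upper bound
    have hpt : ∀ v ∈ S, (∑ i, dg H (P i) v) + t + (if v ∈ B then q else 0) ≤
        p * t + s + (if v ∈ L then t else 0) := by
      intro v hv
      by_cases hvL : v ∈ L
      · have hvB : v ∉ B := fun h => (mem_sdiff.mp h).2 hvL
        rw [if_pos hvL, if_neg hvB]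
        have : ∑ i, dg H (P i) v ≤ p * t := by
          calc _ ≤ ∑ i : Fin p, t := Finset.sum_le_sum (fun i _ => hale v i)
            _ = _ := by simp
        omega
      · rw [if_neg hvL]
        have h1 : ∃ i, dg H (P i) v < s := by
          by_contra! h
          exact hvL (mem_filter.mpr ⟨hv, h⟩)
        obtain ⟨i, hi⟩ := h1
        have hsum : ∀ f : Fin p → ℕ, ∑ j, f j = f i + ∑ j ∈ univ.erase i, f j := fun f =>
          (Finset.add_sum_erase _ _ (mem_univ i)).symm
        have hpt' : p * t = t + ∑ j ∈ (univ : Finset (Fin p)).erase i, t := by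
          rw [← hsum (fun _ => t)]; simp
        by_cases hvB : v ∈ B
        · rw [if_pos hvB]
          have hvW : v ∉ W := (mem_sdiff.mp (mem_sdiff.mp hvB).1).2
          have h2 : ∃ j, j ≠ i ∧ dg H (P j) v + q ≤ t := by
            by_contra! h
            exact hvW (mem_filter.mpr ⟨hv, i, hi, h⟩)
          obtain ⟨j, hj, hjq⟩ := h2
          have hje : j ∈ (univ : Finset (Fin p)).erase i := by simp [hj]
          have h3 : ∑ k ∈ univ.erase i, dg H (P k) v + q ≤ ∑ k ∈ (univ : Finset (Fin p)).erase i, t := by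
            rw [← Finset.add_sum_erase _ _ hje, ← Finset.add_sum_erase _ (fun _ => t) hje]
            have := Finset.sum_le_sum (s := ((univ : Finset (Fin p)).erase i).erase j)
              (fun k _ => hale v k)
            omega
          rw [hsum, hpt']
          omega
        · rw [if_neg hvB, hsum, hpt']
          have := Finset.sum_le_sum (s := ((univ : Finset (Fin p)).erase i)) (fun k _ => hale v k)
          omega
    have hsumpt := Finset.sum_le_sum hpt
    simp only [Finset.sum_add_distrib, Finset.sum_const, smul_eq_mul, ← Finset.sum_filter] at hsumpt
    have hBf : S.filter (· ∈ B) = B := by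
      ext x; simp only [mem_filter, and_iff_right_iff_imp]
      exact fun h => (mem_sdiff.mp (mem_sdiff.mp h).1).1
    have hLf : S.filter (· ∈ L) = L := by
      ext x; simp only [mem_filter, and_iff_right_iff_imp]
      exact fun h => (mem_filter.mp h).1
    rw [hBf, hLf, Finset.sum_comm] at hsumpt
    simp only [dg_double H S] at hsumpt
    have hlow : (p : ℝ) * t * ((1 - 1 / p - ε) * #S) ≤ ((∑ i, ∑ u ∈ P i, dg H S u : ℕ) : ℝ) := by
      push_cast
      calc (p : ℝ) * t * ((1 - 1 / p - ε) * #S) = ∑ i : Fin p, ∑ u ∈ P i, ((1 - 1 / p - ε) * #S) := by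
            simp only [Finset.sum_const, (hP _).2, nsmul_eq_mul]
            simp; ring
        _ ≤ _ := Finset.sum_le_sum fun i _ => Finset.sum_le_sum fun u hu => hdeg u ((hP i).1 hu)
    have hsumR : ((∑ i, ∑ u ∈ P i, dg H S u : ℕ) : ℝ) + #S * t + #B * q ≤
        #S * (p * t) + #S * s + #L * t := by exact_mod_cast hsumpt
    have hp0 : (p : ℝ) ≠ 0 := by positivity
    have hexp : (p : ℝ) * t * ((1 - 1 / p - ε) * #S) = #S * (p * t) - #S * t - #S * t * p * ε := by
      field_simp
    have hcardR : (#(S \ W) : ℝ) ≤ #B + #L := by exact_mod_cast hcard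
    have hLR : (#L : ℝ) ≤ 2 ^ (p * t) * s := by exact_mod_cast hL
    have hqt : (q : ℝ) ≤ t := by
      have : q ≤ t := by rw [ht]; nlinarith
      exact_mod_cast this
    have htc : (4 * (s:ℝ) * q) = t := by rw [ht]; push_cast; ring
    rw [htc]
    have hq0 : (0:ℝ) ≤ q := by positivity
    have hL0 : (0:ℝ) ≤ #L := by positivity
    have e1 : (#(S \ W) : ℝ) * q ≤ #B * q + #L * q := by nlinarith
    have e2 : (#L : ℝ) * q ≤ #L * t := by nlinarith
    have e3 : (#L : ℝ) * t ≤ (2 ^ (p * t) * s) * t := mul_le_mul_of_nonneg_right hLR (by positivity)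
    linarith
end Stab
namespace Stab
open Finset Classical

variable {V : Type} 

def inner {p : ℕ} (H : SimpleGraph V) (c : V → Fin p) : SimpleGraph V where
  Adj u v := H.Adj u v ∧ c u = c v
  symm := ⟨fun _ _ h => ⟨h.1.symm, h.2.symm⟩⟩
  loopless := ⟨fun _ h => H.irrefl h.1⟩

lemma inner_bound {p : ℕ} [Fintype V] (H : SimpleGraph V) (c : V → Fin p) (W : Finset V) :
    e2 (inner H c) univ ≤ ∑ i, e2 H {v ∈ W | c v = i} + 2 * Fintype.card V * #(univ \ W) := by
  have h1 : ∀ u ∈ W, dg (inner H c) univ u ≤ dg H {v ∈ W | c v = c u} u + #(univ \ W) := by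
    intro u hu
    refine (Finset.card_le_card ?_).trans (Finset.card_union_le _ _)
    intro w hw
    rw [mem_filter] at hw
    by_cases h : w ∈ W
    · refine mem_union_left _ (mem_filter.mpr ⟨mem_filter.mpr ⟨h, hw.2.2.symm⟩, hw.2.1⟩)
    · exact mem_union_right _ (by simp [h])
  have h2 : ∑ u ∈ W, dg H {v ∈ W | c v = c u} u = ∑ i, e2 H {v ∈ W | c v = i} := by
    rw [← Finset.sum_fiberwise W c]
    refine Finset.sum_congr rfl fun i _ => ?_
    unfold e2
    refine Finset.sum_congr rfl fun u hu => ?_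
    rw [(mem_filter.mp hu).2]
  have h3 : ∑ u ∈ univ \ W, dg (inner H c) univ u ≤ #(univ \ W) * Fintype.card V := by
    calc _ ≤ ∑ u ∈ univ \ W, Fintype.card V := Finset.sum_le_sum fun u _ => dg_le _ _ _
      _ = _ := by simp
  have h4 := Finset.sum_le_sum h1
  rw [Finset.sum_add_distrib, h2, Finset.sum_const, smul_eq_mul] at h4
  have h5 : #W * #(univ \ W) ≤ Fintype.card V * #(univ \ W) :=
    Nat.mul_le_mul_right _ (Finset.card_le_univ W)
  unfold e2 at *
  rw [← Finset.sum_sdiff (Finset.subset_univ W)]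
  nlinarith

lemma findK (p t : ℕ) (hp : 1 ≤ p) (ε : ℝ) (hε : 0 < ε) (hεp : 2 * ε * p ^ 2 ≤ 1) :
    ∃ n₀ : ℕ, ∀ (V : Type) (H : SimpleGraph V)
    (S : Finset V), n₀ ≤ #S → (∀ v ∈ S, (1 - 1 / p - ε) * #S ≤ dg H S v) →
    HasK H S p t := by
  rcases Nat.lt_or_ge p 2 with h | h
  · obtain rfl : p = 1 := by omega
    refine ⟨t, fun V H S hS _ => HasK.mk' H S 1 t (fun _ => S) (fun i => ⟨subset_rfl, hS⟩) ?_⟩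
    intro i j hij
    exact absurd (Subsingleton.elim i j) hij
  · obtain ⟨r, rfl⟩ : ∃ r, p = r + 1 := ⟨p - 1, by omega⟩
    obtain ⟨n₀, hn₀⟩ := erdosStone hε r t
    refine ⟨n₀, fun V H S hS hdeg => hn₀ V H S hS fun v hv => le_trans ?_ (hdeg v hv)⟩
    refine mul_le_mul_of_nonneg_right ?_ (by positivity)
    have hr : (1:ℝ) ≤ r := by exact_mod_cast (by omega : 1 ≤ r)
    have h1 : 1 / (r:ℝ) - 1 / (r + 1) = 1 / (r * (r + 1)) := by field_simp; ring
    have h2 : 2 * ε ≤ 1 / (r * (r + 1)) := by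
      rw [le_div_iff₀ (by positivity)]
      push_cast at hεp
      nlinarith
    push_cast
    linarith

lemma m_bound (N m ε κ C α : ℝ) (hα : α ≤ 1) (hN : 0 ≤ N) (hm : 0 ≤ m) (hmN : m ≤ N) (hε : 0 < ε) (hε1 : ε ≤ 1)
    (hκ : 0 < κ) (hκ1 : κ ≤ 1 / 8) (hN1 : (3 + C) / (ε * κ) ≤ N) (hC : 0 ≤ C) (hN0 : 1 ≤ N)
    (h : (α + ε) * N ^ 2 - 2 * (ε * κ) * N ^ 2 - α * (N * (N + 1)) ≤
      (α + ε + ε * κ) * (m * (m + 1)) + C - α * (m * (m + 1))) : (1 - 4 * κ) * N ≤ m := by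
  rw [div_le_iff₀ (by positivity)] at hN1
  have hεκ : ε * κ ≤ 1 := by nlinarith
  have a1 : ε * (1 + κ) * m ≤ 2 * N := by
    have : ε * (1 + κ) ≤ 2 := by nlinarith
    nlinarith [mul_pos hε hκ]
  have a2 : (3 + C) * N ≤ N * (ε * κ) * N := mul_le_mul_of_nonneg_right hN1 hN
  have a3 : C ≤ C * N := by nlinarith
  have a4 : α * N ≤ N := by nlinarith
  have a5 : ε * ((1 - 3 * κ) * N ^ 2) ≤ ε * ((1 + κ) * m ^ 2) := by nlinarith
  have a6 := le_of_mul_le_mul_left a5 hε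
  by_contra! hlt
  have a7 : m ^ 2 ≤ ((1 - 4 * κ) * N) ^ 2 := by gcongr
  have a8 : (1 + κ) * m ^ 2 ≤ (1 + κ) * ((1 - 4 * κ) * N) ^ 2 := by gcongr
  have a9 : (1 + κ) * ((1 - 4 * κ) * N) ^ 2 < (1 - 3 * κ) * N ^ 2 := by
    have : (1 + κ) * (1 - 4 * κ) ^ 2 < 1 - 3 * κ := by
      have : 0 < κ * (4 - 8 * κ - 16 * κ ^ 2) := by
        apply mul_pos hκ; nlinarith
      nlinarith
    have hN2 : 0 < N ^ 2 := by positivity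
    nlinarith
  linarith

set_option maxHeartbeats 1000000 in
theorem stab (p s : ℕ) (hp : 1 ≤ p) (hs : 1 ≤ s) (γ : ℝ) (hγ : 0 < γ) :
    ∃ δ : ℝ, 0 < δ ∧ ∃ n₀ : ℕ, ∀ (V : Type) [Fintype V] (H : SimpleGraph V),
      n₀ < Fintype.card V → ¬ HasK H univ (p + 1) s →
      (1 - 1 / p) * (Fintype.card V : ℝ) ^ 2 - 2 * δ * (Fintype.card V : ℝ) ^ 2 ≤ e2 H univ →
      ∃ c : V → Fin p, (e2 (inner H c) univ : ℝ) ≤ γ * (Fintype.card V : ℝ) ^ 2 := by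
  have hpR : (1:ℝ) ≤ p := by exact_mod_cast hp
  have hsR : (1:ℝ) ≤ s := by exact_mod_cast hs
  obtain ⟨q, hq⟩ := exists_nat_gt (s * 16 / γ)
  have hq0 : (0:ℝ) < q := lt_trans (by positivity) hq
  have hq1 : 1 ≤ q := by exact_mod_cast hq0
  rw [div_lt_iff₀ hγ] at hq
  obtain ⟨ε, hε, hεa, hεb, hε1⟩ : ∃ ε : ℝ, 0 < ε ∧ 64 * s * p * ε ≤ γ ∧ 2 * ε * p ^ 2 ≤ 1 ∧ ε ≤ 1 := by
    refine ⟨min (γ / (64 * s * p)) (min (1 / (2 * p ^ 2)) 1), by positivity, ?_, ?_, ?_⟩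
    · have := min_le_left (γ / (64 * s * p)) (min (1 / (2 * (p:ℝ) ^ 2)) 1)
      rw [le_div_iff₀ (by positivity)] at this
      linarith
    · have := (min_le_right (γ / (64 * s * p)) (min (1 / (2 * (p:ℝ) ^ 2)) 1)).trans (min_le_left _ _)
      rw [le_div_iff₀ (by positivity)] at this
      linarith
    · exact (min_le_right _ _).trans (min_le_right _ _)
  obtain ⟨κ, hκ, hκa, hκb⟩ : ∃ κ : ℝ, 0 < κ ∧ 64 * κ ≤ γ ∧ κ ≤ 1 / 8 :=
    ⟨min (γ / 64) (1 / 8), by positivity,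
      by linarith [min_le_left (γ / 64) (1 / 8 : ℝ)], min_le_right _ _⟩
  have hεκ : 0 < ε * κ := mul_pos hε hκ
  obtain ⟨C1, hC1, hEB1⟩ := edgeBound hεκ p s
  obtain ⟨C2, hC2, hEB2⟩ := edgeBound (η := γ / (8 * p)) (by positivity) 1 s
  obtain ⟨n1, hn1⟩ := findK p (4 * s * q) hp ε hε hεb
  obtain ⟨C3, hC3⟩ : ∃ C3 : ℝ, C3 = (2 ^ (p * (4 * s * q)) * s) * (2 * (4 * s * q)) / q := ⟨_, rfl⟩
  have hC30 : 0 ≤ C3 := by rw [hC3]; positivity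
  obtain ⟨n2, hn2⟩ := exists_nat_gt ((3 + C1) / (ε * κ))
  obtain ⟨n3, hn3⟩ := exists_nat_gt ((p * C2 + 2 * C3) * 8 / (3 * γ))
  refine ⟨ε * κ, hεκ, n2 + n3 + 2 * n1 + 1, fun V _ H hN hfree hedges => ?_⟩
  obtain ⟨N, hNdef⟩ : ∃ N : ℝ, N = (Fintype.card V : ℝ) := ⟨_, rfl⟩
  rw [← hNdef] at hedges ⊢
  have hNbig : (n2 + n3 + 2 * n1 + 1 : ℝ) < N := by rw [hNdef]; exact_mod_cast hN
  have hN0 : 0 ≤ N := by rw [hNdef]; positivity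
  have hκN : κ * N ≤ 1 / 8 * N := mul_le_mul_of_nonneg_right hκb hN0
  have hκN2 : 64 * κ * N ≤ γ * N := mul_le_mul_of_nonneg_right hκa hN0
  have hn2' : (0:ℝ) ≤ n2 := by positivity
  have hn3' : (0:ℝ) ≤ n3 := by positivity
  have hn1' : (0:ℝ) ≤ n1 := by positivity
  obtain ⟨S, -, hdeg, hpot⟩ := potential H univ (1 - 1 / p - ε)
  have hfreeS : ¬ HasK H S (p + 1) s := fun h => hfree (h.mono (subset_univ _))
  have hES := hEB1 V H S hfreeS
  have hmN : (#S : ℝ) ≤ N := by rw [hNdef]; exact_mod_cast Finset.card_le_univ S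
  have hpinv : 0 < 1 / (p : ℝ) := by positivity
  have hm : (1 - 4 * κ) * N ≤ #S := by
    refine m_bound N #S ε κ C1 (1 - 1 / p - ε) (by linarith) (by linarith) (by positivity) hmN hε hε1 hκ hκb
      (by linarith) hC1 (by linarith) ?_
    rw [Finset.card_univ, ← hNdef] at hpot
    have e1 : (1 - 1 / (p:ℝ) - ε + ε) = 1 - 1 / p := by ring
    rw [e1]
    linarith
  have hmn1 : n1 ≤ #S := by
    have : (n1 : ℝ) ≤ #S := by linarith
    exact_mod_cast this
  obtain ⟨W, hWS, c, hW, hbad⟩ := struct H S p s q hp hs hq1 ε hfreeS (hn1 V H S hmn1 hdeg) hdeg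
  refine ⟨c, ?_⟩
  have hib := inner_bound H c W
  have hibR : (e2 (inner H c) univ : ℝ) ≤ ∑ i, (e2 H {v ∈ W | c v = i} : ℝ) + 2 * N * #(univ \ W) := by
    rw [hNdef]; exact_mod_cast hib
  have hsum : ∑ i, (e2 H {v ∈ W | c v = i} : ℝ) ≤ γ / 4 * N ^ 2 + p * C2 := by
    calc _ ≤ ∑ i : Fin p, (γ / (4 * p) * N ^ 2 + C2) := by
          refine Finset.sum_le_sum fun i _ => (hEB2 V H _ (hW i)).trans ?_
          have hw : (#{v ∈ W | c v = i} : ℝ) ≤ N := by rw [hNdef]; exact_mod_cast Finset.card_le_univ _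
          have hw0 : (0:ℝ) ≤ #{v ∈ W | c v = i} := by positivity
          generalize (#{v ∈ W | c v = i} : ℝ) = w at hw hw0
          have : w * (w + 1) ≤ 2 * N ^ 2 := by nlinarith
          have h2 : γ / (8 * p) * (w * (w + 1)) ≤ γ / (8 * p) * (2 * N ^ 2) :=
            mul_le_mul_of_nonneg_left this (by positivity)
          have h3 : γ / (8 * p) * (2 * N ^ 2) = γ / (4 * p) * N ^ 2 := by field_simp; ring
          have h4 : (1 - 1 / ((1:ℕ):ℝ) + γ / (8 * p)) = γ / (8 * p) := by simp
          rw [h4]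
          linarith
      _ = _ := by
          simp only [Finset.sum_const, card_univ, Fintype.card_fin, nsmul_eq_mul]
          field_simp
  have hSW : (#(S \ W) : ℝ) ≤ γ / 8 * N + C3 := by
    have h1 : (#(S \ W) : ℝ) ≤ (#S * (4 * s * q) * p * ε + #S * s +
        (2 ^ (p * (4 * s * q)) * s) * (2 * (4 * s * q))) / q := by
      rw [le_div_iff₀ hq0]; exact hbad
    have h2 : (#S * (4 * s * q) * p * ε + #S * s +
        (2 ^ (p * (4 * s * q)) * s) * (2 * (4 * s * q))) / q = #S * (4 * s * p * ε) + #S * (s / q) + C3 := by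
      rw [hC3]; field_simp
    have h3 : (s / q : ℝ) ≤ γ / 16 := by
      rw [div_le_iff₀ hq0]; linarith
    have h4 : 4 * s * p * ε ≤ γ / 16 := by linarith
    have h5 : #S * (4 * s * p * ε) ≤ N * (γ / 16) := by gcongr
    have h6 : #S * (s / q : ℝ) ≤ N * (γ / 16) := by gcongr
    linarith
  have hUW : (#(univ \ W) : ℝ) ≤ 3 * γ / 16 * N + C3 := by
    have h1 : #(univ \ W) + #W = Fintype.card V := by
      have := Finset.card_sdiff_add_card_eq_card (subset_univ W)
      simpa using this
    have h2 := Finset.card_sdiff_add_card_eq_card hWS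
    have h1R : (#(univ \ W) : ℝ) + #W = N := by rw [hNdef]; exact_mod_cast h1
    have h2R : (#(S \ W) : ℝ) + #W = #S := by exact_mod_cast h2
    linarith
  have hlast : p * C2 + 2 * C3 * N ≤ 3 / 8 * γ * N ^ 2 := by
    have h1 : (p * C2 + 2 * C3) * 8 / (3 * γ) ≤ N := by linarith
    rw [div_le_iff₀ (by positivity)] at h1
    have h2 : p * C2 ≤ p * C2 * N := by
      have : 0 ≤ p * C2 := by positivity
      nlinarith
    have h3 := mul_le_mul_of_nonneg_right h1 hN0
    linarith
  have hmul : 2 * N * #(univ \ W) ≤ 2 * N * (3 * γ / 16 * N + C3) := by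
    gcongr
  linarith
end Stab
namespace Stab
open Finset Classical

lemma hasK_copy {V : Type} [Fintype V] (H : SimpleGraph V) {U : Type*} [Fintype U] (G : SimpleGraph U) (r : ℕ)
    (C : G.Coloring (Fin r)) (h : HasK H univ r (Fintype.card U)) : containsCopy H G := by
  obtain ⟨P, hP, hadj⟩ := h
  have : ∀ i, Nonempty (U ≃ P i) := fun i =>
    Fintype.card_eq.mp (by rw [Fintype.card_coe, (hP i).2])
  let g : ∀ i, U ≃ P i := fun i => (this i).some
  refine ⟨⟨fun u => (g (C u) u : V), ?_⟩, ?_⟩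
  · intro a b hab
    exact hadj _ _ (C.valid hab) _ (g (C a) a).2 _ (g (C b) b).2
  · intro a b hab
    change (g (C a) a : V) = (g (C b) b : V) at hab
    by_cases h : C a = C b
    · rw [h] at hab
      exact (g (C b)).injective (Subtype.ext hab)
    · have := hadj _ _ h _ (g (C a) a).2 _ (g (C b) b).2
      rw [hab] at this
      exact absurd this (H.irrefl)

lemma maxcut {V : Type} [Fintype V] {p : ℕ} (H : SimpleGraph V) (c : V → Fin p)
    (hmin : ∀ c' : V → Fin p, e2 (inner H c) univ ≤ e2 (inner H c') univ) (v : V) (j : Fin p) :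
    #{u | c u = c v ∧ H.Adj v u} ≤ #{u | c u = j ∧ H.Adj v u} := by
  by_cases hj : j = c v
  · rw [hj]
  let c' := Function.update c v j
  have h := hmin c'
  rw [e2_erase _ _ v (mem_univ v), e2_erase (inner H c') _ v (mem_univ v)] at h
  have hne : ∀ u, u ≠ v → c' u = c u := fun u hu => Function.update_of_ne hu _ _
  have hv : c' v = j := Function.update_self _ _ _
  have h1 : e2 (inner H c') (univ.erase v) = e2 (inner H c) (univ.erase v) := by
    unfold e2 dg
    refine Finset.sum_congr rfl fun u hu => ?_
    congr 1
    refine Finset.filter_congr fun w hw => ?_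
    simp only [inner]
    rw [hne u (Finset.ne_of_mem_erase hu), hne w (Finset.ne_of_mem_erase hw)]
  have h2 : dg (inner H c) univ v = #{u | c u = c v ∧ H.Adj v u} := by
    unfold dg
    congr 1
    refine Finset.filter_congr fun w hw => ?_
    simp only [inner]
    tauto
  have h3 : dg (inner H c') univ v = #{u | c u = j ∧ H.Adj v u} := by
    unfold dg
    congr 1
    refine Finset.filter_congr fun w hw => ?_
    simp only [inner, hv]
    by_cases hw : w = v
    · subst hw; simp
    · rw [hne w hw]; tauto
  omega

lemma crossEdges_ne {N : ℕ} (H : SimpleGraph (Fin N)) (A B : Finset (Fin N)) (hAB : Disjoint A B) :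
    crossEdges H A B = ∑ u ∈ A, dg H B u := by
  have h1 : {e : Sym2 (Fin N) | e ∈ H.edgeSet ∧ ∃ u ∈ (A : Set (Fin N)), ∃ v ∈ (B : Set (Fin N)), e = s(u, v)} =
      (fun x : Fin N × Fin N => s(x.1, x.2)) '' (((A ×ˢ B).filter (fun x => H.Adj x.1 x.2) : Finset _) : Set (Fin N × Fin N)) := by
    ext e
    simp only [Set.mem_ofPred_eq, Set.mem_image, mem_coe, mem_filter, mem_product, Prod.exists]
    constructor
    · rintro ⟨he, u, hu, v, hv, rfl⟩
      exact ⟨u, v, ⟨⟨hu, hv⟩, he⟩, rfl⟩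
    · rintro ⟨u, v, ⟨⟨hu, hv⟩, he⟩, rfl⟩
      exact ⟨he, u, hu, v, hv, rfl⟩
  unfold crossEdges
  rw [h1, Set.ncard_image_of_injOn, Set.ncard_coe_finset, Finset.card_filter, Finset.sum_product]
  · refine Finset.sum_congr rfl fun u _ => ?_
    unfold dg
    rw [Finset.card_filter]
  · rintro ⟨a, b⟩ hab ⟨a', b'⟩ hab' h
    simp only [mem_coe, mem_filter, mem_product] at hab hab'
    simp only [Sym2.eq_iff] at h
    rcases h with ⟨rfl, rfl⟩ | ⟨rfl, rfl⟩
    · rfl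
    · exact absurd hab'.1.2 (Finset.disjoint_left.mp hAB hab.1.1)

lemma crossEdges_self {N : ℕ} (H : SimpleGraph (Fin N)) (A : Finset (Fin N)) :
    2 * crossEdges H A A = e2 H A := by
  let K : SimpleGraph (Fin N) :=
    { Adj := fun u v => H.Adj u v ∧ u ∈ A ∧ v ∈ A
      symm := ⟨fun _ _ h => ⟨h.1.symm, h.2.2, h.2.1⟩⟩
      loopless := ⟨fun _ h => H.irrefl h.1⟩ }
  have h1 : {e : Sym2 (Fin N) | e ∈ H.edgeSet ∧ ∃ u ∈ (A : Set (Fin N)), ∃ v ∈ (A : Set (Fin N)), e = s(u, v)} =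
      (K.edgeFinset : Set (Sym2 (Fin N))) := by
    ext e
    rw [SimpleGraph.coe_edgeFinset]
    induction e using Sym2.ind with
    | _ a b =>
      simp only [Set.mem_ofPred_eq, SimpleGraph.mem_edgeSet, mem_coe]
      constructor
      · rintro ⟨he, u, hu, v, hv, h⟩
        rw [Sym2.eq_iff] at h
        rcases h with ⟨rfl, rfl⟩ | ⟨rfl, rfl⟩
        · exact ⟨he, hu, hv⟩
        · exact ⟨he, hv, hu⟩
      · rintro ⟨he, ha, hb⟩
        exact ⟨he, a, ha, b, hb, rfl⟩
  unfold crossEdges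
  rw [h1, Set.ncard_coe_finset, ← SimpleGraph.sum_degrees_eq_twice_card_edges]
  unfold e2
  rw [← Finset.sum_subset (Finset.subset_univ A)]
  · refine Finset.sum_congr rfl fun u hu => ?_
    unfold dg
    rw [← SimpleGraph.card_neighborFinset_eq_degree]
    congr 1
    ext w
    simp only [SimpleGraph.mem_neighborFinset, mem_filter, K]
    tauto
  · intro u _ hu
    rw [← SimpleGraph.card_neighborFinset_eq_degree, Finset.card_eq_zero]
    ext w
    simp only [SimpleGraph.mem_neighborFinset, K]
    simp [hu]

lemma sum_symm {p : ℕ} (f : Fin p → Fin p → ℝ) (hf : ∀ i j, f i j = f j i) :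
    ∑ i, ∑ j, f i j = 2 * (∑ i, ∑ j, if i < j then f i j else 0) + ∑ i, f i i := by
  have h1 : ∀ i j, f i j = (if i < j then f i j else 0) + (if j < i then f j i else 0) +
      (if i = j then f i j else 0) := by
    intro i j
    rcases lt_trichotomy i j with h | h | h
    · simp [h, h.not_gt, h.ne]
    · subst h; simp
    · simp [h, h.not_gt, h.ne', hf i j]
  have h2 : ∑ i, ∑ j, (if j < i then f j i else 0) = ∑ i, ∑ j, (if i < j then f i j else 0) :=
    Finset.sum_comm
  calc _ = ∑ i, ∑ j, ((if i < j then f i j else 0) + (if j < i then f j i else 0) +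
      (if i = j then f i j else 0)) := by
        refine Finset.sum_congr rfl fun i _ => Finset.sum_congr rfl fun j _ => h1 i j
    _ = _ := by
      simp only [Finset.sum_add_distrib, h2]
      simp
      ring
end Stab
namespace Stab
open Finset Classical

lemma finish (p : ℕ) (hp : 1 ≤ p) (ξ γ : ℝ) (hξ : 0 < ξ) (hγ : 0 < γ) (hγ1 : 2 * γ ≤ ξ)
    (hγ2 : 3 * γ ≤ ξ ^ 2) (δ : ℝ) (hδ : δ ≤ γ) (N : ℕ) (hN : 1 ≤ N)
    (H : SimpleGraph (Fin N)) (c : Fin N → Fin p)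
    (hedges : (1 - 1 / p) * (N : ℝ) ^ 2 - 2 * δ * (N : ℝ) ^ 2 < e2 H univ)
    (hmin : ∀ c' : Fin N → Fin p, e2 (inner H c) univ ≤ e2 (inner H c') univ)
    (hinner : (e2 (inner H c) univ : ℝ) ≤ γ * (N : ℝ) ^ 2) :
          ((∑ i : Fin p, ∑ j : Fin p, if i < j then
              ({v | c v = i}.ncard * {v | c v = j}.ncard
                - crossEdges H {v | c v = i} {v | c v = j}) else 0 : ℕ) : ℝ) < ξ * (N : ℝ) ^ 2 ∧
          ((∑ i : Fin p, crossEdges H {v | c v = i} {v | c v = i} : ℕ) : ℝ) < ξ * (N : ℝ) ^ 2 ∧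
          (∀ i j : Fin p, ∀ v : Fin N, c v = i →
            {u | c u = i ∧ H.Adj v u}.ncard ≤ {u | c u = j ∧ H.Adj v u}.ncard) ∧
          (∀ i : Fin p, (N : ℝ) / p - ξ * N < ({v | c v = i}.ncard : ℝ) ∧
            ({v | c v = i}.ncard : ℝ) < (N : ℝ) / p + ξ * N) := by
  have hpR : (1:ℝ) ≤ p := by exact_mod_cast hp
  have hN2 : (0:ℝ) < (N:ℝ) ^ 2 := by positivity
  let Vc : Fin p → Finset (Fin N) := fun i => univ.filter (fun v => c v = i)
  have hV : ∀ i, {v | c v = i} = (Vc i : Set (Fin N)) := fun i => by ext; simp [Vc]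
  let M : Fin p → Fin p → ℕ := fun i j => ∑ u ∈ Vc i, dg H (Vc j) u
  have hMsymm : ∀ i j, M i j = M j i := fun i j => dg_double H (Vc i) (Vc j)
  have hcross : ∀ i j, i ≠ j → crossEdges H (Vc i) (Vc j) = M i j := by
    intro i j hij
    refine crossEdges_ne H _ _ (Finset.disjoint_left.mpr fun x hx hy => hij ?_)
    rw [← (mem_filter.mp hx).2, (mem_filter.mp hy).2]
  have hself : ∀ i, 2 * crossEdges H (Vc i) (Vc i) = M i i := fun i => crossEdges_self H (Vc i)
  have hMle : ∀ i j, M i j ≤ #(Vc i) * #(Vc j) := by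
    intro i j
    calc M i j ≤ ∑ u ∈ Vc i, #(Vc j) := Finset.sum_le_sum fun u _ => dg_le _ _ _
      _ = _ := by simp
  have hMtot : ∑ i, ∑ j, M i j = e2 H univ := by
    have h1 : ∀ u, ∑ j, dg H (Vc j) u = dg H univ u := by
      intro u
      unfold dg
      simp only [Finset.card_filter]
      exact Finset.sum_fiberwise univ c _
    unfold e2
    rw [← Finset.sum_fiberwise univ c]
    refine Finset.sum_congr rfl fun i _ => ?_
    rw [Finset.sum_comm]
    refine Finset.sum_congr rfl fun u _ => h1 u
  have hMdiag : ∑ i, M i i = e2 (inner H c) univ := by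
    unfold e2
    rw [← Finset.sum_fiberwise univ c]
    refine Finset.sum_congr rfl fun i _ => ?_
    refine Finset.sum_congr rfl fun u hu => ?_
    unfold dg
    congr 1
    ext w
    have hu1 : c u = i := (mem_filter.mp hu).2
    simp only [Vc, mem_filter, mem_univ, true_and]
    change c w = i ∧ H.Adj u w ↔ H.Adj u w ∧ c u = c w
    rw [hu1]
    exact ⟨fun h => ⟨h.2, h.1.symm⟩, fun h => ⟨h.2.symm, h.1⟩⟩
  have hntot : ∑ i, #(Vc i) = N := by
    have := Finset.sum_fiberwise univ c (fun _ => 1)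
    simpa [Vc] using this
  let n : Fin p → ℝ := fun i => #(Vc i)
  have hntotR : ∑ i, n i = N := by simp only [n]; exact_mod_cast hntot
  have hMtotR : ∑ i, ∑ j, (M i j : ℝ) = e2 H univ := by exact_mod_cast hMtot
  have hMdiagR : ∑ i, (M i i : ℝ) = e2 (inner H c) univ := by exact_mod_cast hMdiag
  have hsq : ∑ i, (n i - N / p) ^ 2 = ∑ i, n i ^ 2 - (N:ℝ) ^ 2 / p := by
    have : ∀ i, (n i - N / p) ^ 2 = n i ^ 2 - 2 * (N / p) * n i + (N / p) ^ 2 := fun i => by ring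
    simp only [this, Finset.sum_add_distrib, Finset.sum_sub_distrib, ← Finset.mul_sum, hntotR]
    simp
    field_simp
    ring
  have hnn : ∑ i, ∑ j, n i * n j = (N:ℝ) ^ 2 := by
    rw [← Finset.sum_mul_sum, hntotR]; ring
  have hs := sum_symm (fun i j => n i * n j - M i j) (fun i j => by
    simp only [hMsymm i j]; ring)
  simp only [Finset.sum_sub_distrib, hnn, hMtotR, hMdiagR] at hs
  have hnsq : ∑ i, n i * n i = ∑ i, n i ^ 2 := by simp only [sq]
  rw [hnsq] at hs
  have hsq0 : 0 ≤ ∑ i, (n i - N / p) ^ 2 := Finset.sum_nonneg fun i _ => sq_nonneg _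
  set D := ∑ i, ∑ j, (if i < j then n i * n j - (M i j : ℝ) else 0) with hD
  have hD0 : 0 ≤ D := by
    refine Finset.sum_nonneg fun i _ => Finset.sum_nonneg fun j _ => ?_
    split_ifs
    · have : (M i j : ℝ) ≤ n i * n j := by simp only [n]; exact_mod_cast hMle i j
      linarith
    · rfl
  have hδN : δ * (N:ℝ) ^ 2 ≤ γ * (N:ℝ) ^ 2 := mul_le_mul_of_nonneg_right hδ hN2.le
  have hγN : 2 * γ * (N:ℝ) ^ 2 ≤ ξ * (N:ℝ) ^ 2 := mul_le_mul_of_nonneg_right hγ1 hN2.le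
  have hγN2 : 3 * γ * (N:ℝ) ^ 2 ≤ ξ ^ 2 * (N:ℝ) ^ 2 := mul_le_mul_of_nonneg_right hγ2 hN2.le
  have hγN0 : 0 < γ * (N:ℝ) ^ 2 := by positivity
  have hexp : (1 - 1 / (p:ℝ)) * (N : ℝ) ^ 2 = (N:ℝ) ^ 2 - (N:ℝ) ^ 2 / p := by ring
  simp only [hV, Set.ncard_coe_finset]
  refine ⟨?_, ?_, ?_, ?_⟩
  · have h1 : ((∑ i : Fin p, ∑ j : Fin p, if i < j then
              (#(Vc i) * #(Vc j) - crossEdges H (Vc i) (Vc j)) else 0 : ℕ) : ℝ) = D := by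
      rw [hD]
      push_cast
      refine Finset.sum_congr rfl fun i _ => Finset.sum_congr rfl fun j _ => ?_
      split_ifs with h
      · rw [hcross i j h.ne, Nat.cast_sub (hMle i j)]
        push_cast
        rfl
      · rfl
    rw [h1]
    linarith
  · have h1 : 2 * ∑ i : Fin p, crossEdges H (Vc i) (Vc i) = e2 (inner H c) univ := by
      rw [Finset.mul_sum, ← hMdiag]
      exact Finset.sum_congr rfl fun i _ => hself i
    have h1R : 2 * ((∑ i : Fin p, crossEdges H (Vc i) (Vc i) : ℕ) : ℝ) = e2 (inner H c) univ := by
      exact_mod_cast h1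
    linarith
  · intro i j v hv
    have h := maxcut H c hmin v j
    rw [hv] at h
    have e : ∀ k, {u | c u = k ∧ H.Adj v u} = ((univ.filter (fun u => c u = k ∧ H.Adj v u) : Finset (Fin N)) : Set (Fin N)) := by
      intro k; ext; simp
    rw [e i, e j, Set.ncard_coe_finset, Set.ncard_coe_finset]
    exact h
  · intro i
    have h1 : (n i - N / p) ^ 2 < (ξ * N) ^ 2 := by
      have : (n i - N / p) ^ 2 ≤ ∑ i, (n i - N / p) ^ 2 :=
        Finset.single_le_sum (f := fun i => (n i - N / p) ^ 2) (fun i _ => sq_nonneg _) (mem_univ i)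
      rw [mul_pow]
      linarith
    have h2 := abs_lt_of_sq_lt_sq h1 (by positivity)
    rw [abs_lt] at h2
    change (N:ℝ) / p - ξ * N < n i ∧ n i < (N:ℝ) / p + ξ * N
    constructor <;> linarith [h2.1, h2.2]
end Stab


namespace Stab
open Finset Classical

theorem main (p : ℕ) {U : Type*} [Fintype U] (G : SimpleGraph U)
    (hchi : G.chromaticNumber = (p + 1 : ℕ)) :
    ∀ ξ : ℝ, 0 < ξ → ∃ δ : ℝ, 0 < δ ∧ ∃ n₀ : ℕ, 0 < n₀ ∧ ∀ N : ℕ, n₀ < N →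
      ∀ H : SimpleGraph (Fin N),
        ((p : ℝ) - 1) * (N : ℝ) ^ 2 / (2 * p) - δ * (N : ℝ) ^ 2 < (H.edgeSet.ncard : ℝ) →
        ¬ containsCopy H G →
        ∃ c : Fin N → Fin p,
          -- (1) almost all cross pairs are edges
          ((∑ i : Fin p, ∑ j : Fin p, if i < j then
              ({v | c v = i}.ncard * {v | c v = j}.ncard
                - crossEdges H {v | c v = i} {v | c v = j}) else 0 : ℕ) : ℝ) < ξ * (N : ℝ) ^ 2 ∧
          -- (2) few edges inside the classes
          ((∑ i : Fin p, crossEdges H {v | c v = i} {v | c v = i} : ℕ) : ℝ) < ξ * (N : ℝ) ^ 2 ∧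
          -- (3) each vertex has no more neighbors in its own class than in any other class
          (∀ i j : Fin p, ∀ v : Fin N, c v = i →
            {u | c u = i ∧ H.Adj v u}.ncard ≤ {u | c u = j ∧ H.Adj v u}.ncard) ∧
          -- (4) the classes are balanced
          (∀ i : Fin p, (N : ℝ) / p - ξ * N < ({v | c v = i}.ncard : ℝ) ∧
            ({v | c v = i}.ncard : ℝ) < (N : ℝ) / p + ξ * N) := by
  intro ξ hξ
  have hcol : G.Colorable (p + 1) :=
    SimpleGraph.chromaticNumber_le_iff_colorable.mp hchi.le
  obtain ⟨C⟩ := hcol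
  have hU : 1 ≤ Fintype.card U := by
    rcases Nat.eq_zero_or_pos (Fintype.card U) with h | h
    · have : IsEmpty U := Fintype.card_eq_zero_iff.mp h
      have h0 : G.chromaticNumber = 0 := SimpleGraph.chromaticNumber_eq_zero_of_isEmpty
      rw [h0] at hchi
      exact absurd hchi.symm (by exact_mod_cast Nat.succ_ne_zero p)
    · exact h
  rcases Nat.eq_zero_or_pos p with rfl | hp
  · refine ⟨1, one_pos, Fintype.card U, hU, fun N hN H _ hH => absurd ?_ hH⟩
    refine hasK_copy H G 1 C (HasK.mk' H univ 1 _ (fun _ => univ) (fun i => ⟨subset_rfl, ?_⟩) ?_)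
    · simpa using hN.le
    · intro i j hij
      exact absurd (Subsingleton.elim i j) hij
  · have hpR : (0:ℝ) < p := by exact_mod_cast hp
    obtain ⟨γ, hγ, hγ1, hγ2⟩ : ∃ γ : ℝ, 0 < γ ∧ 2 * γ ≤ ξ ∧ 3 * γ ≤ ξ ^ 2 :=
      ⟨min (ξ / 2) (ξ ^ 2 / 3), by positivity,
        by linarith [min_le_left (ξ / 2) (ξ ^ 2 / 3)], by linarith [min_le_right (ξ / 2) (ξ ^ 2 / 3)]⟩
    obtain ⟨δ, hδ, n₀, hst⟩ := stab p (Fintype.card U) hp hU γ hγ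
    refine ⟨min δ γ, by positivity, n₀ + 1, by omega, fun N hN H hE hH => ?_⟩
    have hfree : ¬ HasK H univ (p + 1) (Fintype.card U) := fun h => hH (hasK_copy H G _ C h)
    have hedge : (2 : ℝ) * H.edgeSet.ncard = e2 H univ := by
      have h1 := crossEdges_self H univ
      have h2 : crossEdges H ((univ : Finset (Fin N)) : Set (Fin N)) ((univ : Finset (Fin N)) : Set (Fin N)) = H.edgeSet.ncard := by
        unfold crossEdges
        congr 1
        ext e
        induction e using Sym2.ind with
        | _ a b => simp; intro _; exact ⟨a, b, Or.inl ⟨rfl, rfl⟩⟩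
      rw [h2] at h1
      exact_mod_cast h1
    have hE2 : (1 - 1 / p) * (N : ℝ) ^ 2 - 2 * min δ γ * (N : ℝ) ^ 2 < e2 H univ := by
      rw [← hedge]
      have : ((p : ℝ) - 1) * (N : ℝ) ^ 2 / (2 * p) = (1 - 1 / p) * (N : ℝ) ^ 2 / 2 := by
        field_simp
      rw [this] at hE
      linarith
    obtain ⟨c₀, hc₀⟩ := hst (Fin N) H (by simpa using by omega) hfree (by
      rw [Fintype.card_fin]
      have := mul_le_mul_of_nonneg_right (min_le_left δ γ) (sq_nonneg (N:ℝ))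
      linarith)
    rw [Fintype.card_fin] at hc₀
    obtain ⟨c, -, hc⟩ := Finset.exists_min_image (univ : Finset (Fin N → Fin p))
      (fun c => e2 (inner H c) univ) ⟨c₀, mem_univ _⟩
    refine ⟨c, finish p hp ξ γ hξ hγ hγ1 hγ2 (min δ γ) (min_le_right _ _) N (by omega) H c hE2
      (fun c' => hc c' (mem_univ _)) (le_trans ?_ hc₀)⟩
    exact_mod_cast hc c₀ (mem_univ _)

end Stab

theorem statement_12 (p : ℕ) {U : Type*} [Fintype U] (G : SimpleGraph U)
    (hchi : G.chromaticNumber = (p + 1 : ℕ)) :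
    ∀ ξ : ℝ, 0 < ξ → ∃ δ : ℝ, 0 < δ ∧ ∃ n₀ : ℕ, 0 < n₀ ∧ ∀ N : ℕ, n₀ < N →
      ∀ H : SimpleGraph (Fin N),
        ((p : ℝ) - 1) * (N : ℝ) ^ 2 / (2 * p) - δ * (N : ℝ) ^ 2 < (H.edgeSet.ncard : ℝ) →
        ¬ containsCopy H G →
        ∃ c : Fin N → Fin p,
          -- (1) almost all cross pairs are edges
          ((∑ i : Fin p, ∑ j : Fin p, if i < j then
              ({v | c v = i}.ncard * {v | c v = j}.ncard
                - crossEdges H {v | c v = i} {v | c v = j}) else 0 : ℕ) : ℝ) < ξ * (N : ℝ) ^ 2 ∧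
          -- (2) few edges inside the classes
          ((∑ i : Fin p, crossEdges H {v | c v = i} {v | c v = i} : ℕ) : ℝ) < ξ * (N : ℝ) ^ 2 ∧
          -- (3) each vertex has no more neighbors in its own class than in any other class
          (∀ i j : Fin p, ∀ v : Fin N, c v = i →
            {u | c u = i ∧ H.Adj v u}.ncard ≤ {u | c u = j ∧ H.Adj v u}.ncard) ∧
          -- (4) the classes are balanced
          (∀ i : Fin p, (N : ℝ) / p - ξ * N < ({v | c v = i}.ncard : ℝ) ∧
            ({v | c v = i}.ncard : ℝ) < (N : ℝ) / p + ξ * N) := by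
  exact Stab.main p G hchi
end

section
/- Let G be an edge-critical graph with χ(G) = k + 1, and let m be the maximum size of a color class taken over all proper (k+1)-colorings of G. Then G is isomorphic to a subgraph of the graph K⁺ obtained from the complete k-partite graph with one part of size m + 1 and k − 1 parts of size m by adding one extra edge inside the part of size m + 1. -/
open SimpleGraph

/-- The maximum size of a color class over all proper `k`-colorings of `G`. -/
noncomputable def maxClassSize {V : Type*} (G : SimpleGraph V) (k : ℕ) : ℕ :=
  sSup { m : ℕ | ∃ C : G.Coloring (Fin k), ∃ i : Fin k, m = {v | C v = i}.ncard }

/-- `KplusGraph k m` : the complete `k`-partite graph with one part of size `m + 1` and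
`k - 1` parts of size `m`, together with one extra edge (between the vertices `0` and `1`)
inside the part of size `m + 1`. -/
def KplusGraph (k m : ℕ) : SimpleGraph (Fin (m + 1) ⊕ (Fin (k - 1) × Fin m)) :=
  SimpleGraph.fromRel (fun a b =>
    match a, b with
    | Sum.inl x, Sum.inl y => x = 0 ∧ y = 1
    | Sum.inl _, Sum.inr _ => True
    | Sum.inr _, Sum.inl _ => True
    | Sum.inr p, Sum.inr q => p.1 ≠ q.1)

theorem exists_injOn_fin_aux {V : Type*} [Fintype V] (S : Set V) (p : ℕ)
    (h : S.ncard ≤ p + 1) : ∃ g : V → Fin (p + 1), Set.InjOn g S := by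
  classical
  have hc : Fintype.card S ≤ Fintype.card (Fin (p + 1)) := by
    rw [Fintype.card_fin, ← Nat.card_eq_fintype_card]
    exact h
  obtain ⟨g⟩ := Function.Embedding.nonempty_of_card_le hc
  refine ⟨fun v => if hv : v ∈ S then g ⟨v, hv⟩ else 0, ?_⟩
  intro a ha b hb hab
  simp only [ha, hb, dif_pos] at hab
  exact congrArg Subtype.val (g.injective hab)

theorem ncard_le_maxClassSize_aux {V : Type*} [Fintype V] (G : SimpleGraph V) (k : ℕ)
    (C : G.Coloring (Fin k)) (i : Fin k) : {v | C v = i}.ncard ≤ maxClassSize G k := by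
  unfold maxClassSize
  apply le_csSup
  · refine ⟨Nat.card V, ?_⟩
    rintro m ⟨C, i, rfl⟩
    exact Set.ncard_le_card _
  · exact ⟨C, i, rfl⟩

theorem statement_13 (k : ℕ) {V : Type*} [Fintype V] (G : SimpleGraph V)
    (hchi : G.chromaticNumber = (k + 1 : ℕ)) (hcrit : EdgeCritical G) :
    containsCopy (KplusGraph k (maxClassSize G (k + 1))) G := by
  classical
  obtain ⟨u, v, huv, hch⟩ := hcrit
  have hHk : (G.deleteEdges {s(u, v)}).chromaticNumber = (k : ℕ∞) := by
    rw [hchi] at hch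
    push_cast at hch
    exact ENat.add_left_injective_of_ne_top ENat.one_ne_top hch
  have hcol : (G.deleteEdges {s(u, v)}).Colorable k :=
    chromaticNumber_le_iff_colorable.1 hHk.le
  have hncol : ¬ G.Colorable k := by
    intro h
    have h1 := chromaticNumber_le_iff_colorable.2 h
    rw [hchi] at h1
    have h2 : k + 1 ≤ k := by exact_mod_cast h1
    omega
  obtain ⟨C⟩ := hcol
  have hC : ∀ a b, G.Adj a b → C a = C b → (a = u ∧ b = v) ∨ (a = v ∧ b = u) := by
    intro a b hab hc
    by_contra hne
    refine C.valid (v := a) (w := b) ?_ hc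
    rw [deleteEdges_adj]
    refine ⟨hab, ?_⟩
    simpa [Sym2.eq_iff] using hne
  have huvC : C v = C u := by
    by_contra hne
    apply hncol
    refine ⟨Coloring.mk C ?_⟩
    intro a b hab hc
    rcases hC a b hab hc with ⟨rfl, rfl⟩ | ⟨rfl, rfl⟩
    · exact hne hc.symm
    · exact hne hc
  have hne : v ≠ u := huv.ne'
  -- the (k+1)-coloring of G
  let D : G.Coloring (Fin (k + 1)) :=
    Coloring.mk (fun w => if w = u then Fin.last k else (C w).castSucc) (by
      intro a b hab
      by_cases ha : a = u <;> by_cases hb : b = u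
      · subst ha; subst hb; exact absurd hab (G.loopless.irrefl _)
      · simp [ha, hb, (Fin.castSucc_lt_last _).ne']
      · simp [ha, hb, (Fin.castSucc_lt_last _).ne]
      · simp only [ha, hb, if_false]
        intro h
        have h' := Fin.castSucc_injective _ h
        rcases hC a b hab h' with ⟨h1, _⟩ | ⟨_, h1⟩
        · exact ha h1
        · exact hb h1)
  have hDu : ∀ w, w ≠ u → D w = (C w).castSucc := fun w hw => if_neg hw
  have hle := ncard_le_maxClassSize_aux G (k + 1) D
  have hpos : 0 < maxClassSize G (k + 1) := by
    refine lt_of_lt_of_le ?_ (hle (D u))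
    rw [Set.ncard_pos]
    exact ⟨u, rfl⟩
  generalize maxClassSize G (k + 1) = m at hle hpos
  obtain ⟨p, rfl⟩ : ∃ p, m = p + 1 := ⟨m - 1, by omega⟩
  choose g hg using fun i => exists_injOn_fin_aux _ p (hle i)
  have hg' : ∀ a b, a ≠ u → b ≠ u → C a = C b →
      g (C a).castSucc a = g (C a).castSucc b → a = b := by
    intro a b ha hb hab h
    refine hg (C a).castSucc ?_ ?_ h
    · exact hDu a ha
    · rw [hab]; exact hDu b hb
  have hcard : Fintype.card {c : Fin k // c ≠ C u} = k - 1 := by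
    simp [Fintype.card_subtype_compl]
  let e := Fintype.equivFinOfCardEq hcard
  let s := Equiv.swap (g (C u).castSucc v) 0
  let f : V → Fin (p + 1 + 1) ⊕ (Fin (k - 1) × Fin (p + 1)) := fun w =>
    if w = u then Sum.inl 0
    else if h : C w = C u then Sum.inl (Fin.succ (s (g (C u).castSucc w)))
    else Sum.inr (e ⟨C w, h⟩, g (C w).castSucc w)
  have fu : f u = Sum.inl 0 := if_pos rfl
  have f1 : ∀ w, w ≠ u → C w = C u → f w = Sum.inl (Fin.succ (s (g (C u).castSucc w))) := by
    intro w h1 h2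
    simp only [f, h1, h2, if_false, dif_pos]
  have f2 : ∀ w, w ≠ u → (h : C w ≠ C u) → f w = Sum.inr (e ⟨C w, h⟩, g (C w).castSucc w) := by
    intro w h1 h2
    simp only [f, h1, h2, if_false, dif_neg, not_false_eq_true]
  have fv : f v = Sum.inl 1 := by
    rw [f1 v hne huvC]
    simp [s]
  have fl : ∀ w, C w = C u → ∃ x, f w = Sum.inl x := by
    intro w h
    by_cases hw : w = u
    · exact ⟨0, by rw [hw, fu]⟩
    · exact ⟨_, f1 w hw h⟩
  have fr : ∀ w, (h : C w ≠ C u) → f w = Sum.inr (e ⟨C w, h⟩, g (C w).castSucc w) := by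
    intro w h
    exact f2 w (fun hw => h (by rw [hw])) h
  have finj : Function.Injective f := by
    intro a b hab
    by_cases ha : C a = C u <;> by_cases hb : C b = C u
    · by_cases hau : a = u <;> by_cases hbu : b = u
      · rw [hau, hbu]
      · rw [hau, fu, f1 b hbu hb] at hab
        exact absurd (Sum.inl.inj hab).symm (Fin.succ_ne_zero _)
      · rw [hbu, fu, f1 a hau ha] at hab
        exact absurd (Sum.inl.inj hab) (Fin.succ_ne_zero _)
      · rw [f1 a hau ha, f1 b hbu hb] at hab
        have h := s.injective (Fin.succ_injective _ (Sum.inl.inj hab))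
        rw [← ha] at h
        exact hg' a b hau hbu (ha.trans hb.symm) h
    · obtain ⟨x, hx⟩ := fl a ha
      rw [hx, fr b hb] at hab
      cases hab
    · obtain ⟨x, hx⟩ := fl b hb
      rw [hx, fr a ha] at hab
      cases hab
    · rw [fr a ha, fr b hb] at hab
      have h := Prod.ext_iff.1 (Sum.inr.inj hab)
      have hc : C a = C b := congrArg Subtype.val (e.injective h.1)
      have h2 := h.2
      simp only at h2
      rw [← hc] at h2
      exact hg' a b (fun hw => ha (by rw [hw])) (fun hw => hb (by rw [hw])) hc h2
  refine ⟨⟨f, ?_⟩, finj⟩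
  intro a b hab
  rw [KplusGraph, fromRel_adj]
  refine ⟨fun h => hab.ne (finj h), ?_⟩
  by_cases hc : C a = C b
  · rcases hC a b hab hc with ⟨rfl, rfl⟩ | ⟨rfl, rfl⟩
    · rw [fu, fv]; simp
    · rw [fu, fv]; simp
  · by_cases ha : C a = C u <;> by_cases hb : C b = C u
    · exact absurd (ha.trans hb.symm) hc
    · obtain ⟨x, hx⟩ := fl a ha
      rw [hx, fr b hb]; simp
    · obtain ⟨x, hx⟩ := fl b hb
      rw [hx, fr a ha]; simp
    · rw [fr a ha, fr b hb]
      left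
      intro h
      exact hc (congrArg Subtype.val (e.injective h))
end

section
/- Let k ≥ 2 and t ≥ 2 be fixed integers. Then there exists n₀ such that for all integers n ≥ n₀, the Ramsey number satisfies R(K_{k+1}, K₁ + nK_t) = k·n·t + 1. -/
open SimpleGraph

namespace FanRamsey

lemma ramsey_exists {V : Type} [DecidableEq V] (G : SimpleGraph V) [DecidableRel G.Adj] :
    ∀ m a b : ℕ, a + b = m → ∀ s : Finset V, 2 ^ m ≤ s.card →
      (∃ c ⊆ s, G.IsNClique a c) ∨ (∃ c ⊆ s, Gᶜ.IsNClique b c) := by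
  intro m
  induction m with
  | zero =>
    intro a b hab s _
    obtain rfl : a = 0 := by omega
    exact Or.inl ⟨∅, by simp, by simp [isNClique_iff]⟩
  | succ m ih =>
    intro a b hab s hs
    rcases Nat.eq_zero_or_pos a with rfl | ha
    · exact Or.inl ⟨∅, by simp, by simp [isNClique_iff]⟩
    rcases Nat.eq_zero_or_pos b with rfl | hb
    · exact Or.inr ⟨∅, by simp, by simp [isNClique_iff]⟩
    obtain ⟨a, rfl⟩ : ∃ a', a = a' + 1 := ⟨a - 1, by omega⟩
    obtain ⟨b, rfl⟩ : ∃ b', b = b' + 1 := ⟨b - 1, by omega⟩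
    have hpos : 0 < 2 ^ m := by positivity
    rw [pow_succ] at hs
    obtain ⟨v, hv⟩ : s.Nonempty := Finset.card_pos.1 (by omega)
    have hsplit := Finset.card_filter_add_card_filter_not (s := s.erase v) (fun w => G.Adj v w)
    rw [Finset.card_erase_of_mem hv] at hsplit
    by_cases h1 : 2 ^ m ≤ ((s.erase v).filter (fun w => G.Adj v w)).card
    · rcases ih a (b + 1) (by omega) _ h1 with ⟨c, hc, hcl⟩ | ⟨c, hc, hcl⟩
      · refine Or.inl ⟨insert v c, ?_, hcl.insert ?_⟩
        · intro x hx
          rcases Finset.mem_insert.1 hx with rfl | hx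
          · exact hv
          · exact Finset.mem_of_mem_erase (Finset.mem_filter.1 (hc hx)).1
        · intro x hx
          exact (Finset.mem_filter.1 (hc hx)).2
      · exact Or.inr ⟨c, fun x hx => Finset.mem_of_mem_erase (Finset.mem_filter.1 (hc hx)).1, hcl⟩
    · have h2 : 2 ^ m ≤ ((s.erase v).filter (fun w => ¬ G.Adj v w)).card := by omega
      rcases ih (a + 1) b (by omega) _ h2 with ⟨c, hc, hcl⟩ | ⟨c, hc, hcl⟩
      · exact Or.inl ⟨c, fun x hx => Finset.mem_of_mem_erase (Finset.mem_filter.1 (hc hx)).1, hcl⟩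
      · refine Or.inr ⟨insert v c, ?_, hcl.insert ?_⟩
        · intro x hx
          rcases Finset.mem_insert.1 hx with rfl | hx
          · exact hv
          · exact Finset.mem_of_mem_erase (Finset.mem_filter.1 (hc hx)).1
        · intro x hx
          have := Finset.mem_filter.1 (hc hx)
          rw [compl_adj]
          exact ⟨(Finset.ne_of_mem_erase this.1).symm, this.2⟩

/-- Greedy packing of disjoint cliques. -/
lemma pack {V : Type} [DecidableEq V] (B : SimpleGraph V) (t C : ℕ)
    (hC : ∀ s : Finset V, C ≤ s.card → ∃ c ⊆ s, B.IsNClique t c) :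
    ∀ (n : ℕ) (s : Finset V), n * t + C ≤ s.card →
      ∃ g : Fin n → Fin t → V, (∀ i j, g i j ∈ s) ∧
        (∀ i j i' j', g i j = g i' j' → i = i' ∧ j = j') ∧
        ∀ i j j', j ≠ j' → B.Adj (g i j) (g i j') := by
  intro n
  induction n with
  | zero => intro s _; exact ⟨fun i => i.elim0, fun i => i.elim0, fun i => i.elim0, fun i => i.elim0⟩
  | succ n ih =>
    intro s hs
    rw [Nat.add_mul, Nat.one_mul] at hs
    obtain ⟨c, hcs, hcl⟩ := hC s (by omega)
    have hcard := Finset.card_sdiff_add_card_eq_card hcs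
    rw [hcl.card_eq] at hcard
    obtain ⟨g, hg1, hg2, hg3⟩ := ih (s \ c) (by omega)
    let e := (Finset.equivFinOfCardEq hcl.card_eq).symm
    refine ⟨Fin.cons (fun j => (e j : V)) g, ?_, ?_, ?_⟩
    · intro i j
      refine Fin.cases ?_ (fun i => ?_) i
      · simpa using hcs (e j).2
      · simpa using (Finset.mem_sdiff.1 (hg1 i j)).1
    · intro i j i' j'
      refine Fin.cases ?_ (fun i => ?_) i <;> refine Fin.cases ?_ (fun i' => ?_) i'
      · intro h
        simp only [Fin.cons_zero] at h
        exact ⟨rfl, e.injective (Subtype.ext h)⟩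
      · intro h
        simp only [Fin.cons_zero, Fin.cons_succ] at h
        exact absurd (h ▸ (e j).2) (Finset.mem_sdiff.1 (hg1 i' j')).2
      · intro h
        simp only [Fin.cons_zero, Fin.cons_succ] at h
        exact absurd (h ▸ (e j').2) (Finset.mem_sdiff.1 (hg1 i j)).2
      · intro h
        simp only [Fin.cons_succ] at h
        have := hg2 _ _ _ _ h
        exact ⟨by rw [this.1], this.2⟩
    · intro i j j' hj
      refine Fin.cases ?_ (fun i => ?_) i
      · simp only [Fin.cons_zero]
        exact hcl.isClique (e j).2 (e j').2 (fun h => hj (e.injective (Subtype.ext h)))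
      · simpa using hg3 i j j' hj

lemma fan_copy {V : Type} (B : SimpleGraph V) (n t : ℕ) (v : V) (g : Fin n → Fin t → V)
    (hv : ∀ i j, B.Adj v (g i j))
    (hinj : ∀ i j i' j', g i j = g i' j' → i = i' ∧ j = j')
    (hadj : ∀ i j j', j ≠ j' → B.Adj (g i j) (g i j')) :
    containsCopy B (genFan n t) := by
  refine ⟨⟨fun o => o.elim v (fun p => g p.1 p.2), ?_⟩, ?_⟩
  · rintro (_ | ⟨i, j⟩) (_ | ⟨i', j'⟩) h
    · exact absurd rfl h.ne
    · exact hv _ _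
    · exact (hv _ _).symm
    · have hne := h.ne
      have hi : i = i' := by
        simp only [genFan, fromRel_adj] at h
        rcases h.2 with h | h
        · simpa using h
        · have := by simpa using h
          exact this.symm
      subst hi
      exact hadj i j j' (fun h => hne (by rw [h]))
  · rintro (_ | ⟨i, j⟩) (_ | ⟨i', j'⟩) h
    · rfl
    · exact absurd h (hv _ _).ne
    · exact absurd h (hv _ _).ne'
    · obtain ⟨rfl, rfl⟩ := hinj i j i' j' h
      rfl

lemma clique_copy {V : Type} (R : SimpleGraph V) (k : ℕ) (h : ¬ R.CliqueFree k) :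
    containsCopy R (completeGraph (Fin k)) :=
  ⟨(topEmbeddingOfNotCliqueFree h).toHom, (topEmbeddingOfNotCliqueFree h).injective⟩

lemma upper (k t n : ℕ) (hk : 2 ≤ k) (ht : 2 ≤ t) (hn : 3 * k * (2 ^ (k + 1 + t) + 1) ≤ n) :
    arrows (k * n * t + 1) (completeGraph (Fin (k + 1))) (genFan n t) := by
  classical
  intro R
  by_cases hcf : R.CliqueFree (k + 1)
  swap
  · exact Or.inl (clique_copy R _ hcf)
  right
  set C := 2 ^ (k + 1 + t) with hCdef
  have hC : ∀ s : Finset (Fin (k * n * t + 1)), C ≤ s.card → ∃ c ⊆ s, Rᶜ.IsNClique t c := by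
    intro s hs
    rcases ramsey_exists R _ (k + 1) t rfl s hs with ⟨c, _, hc⟩ | h
    · exact absurd hc (hcf c)
    · exact h
  by_cases hdeg : ∃ v, n * t + C ≤ (Rᶜ.neighborFinset v).card
  · obtain ⟨v, hv⟩ := hdeg
    obtain ⟨g, hg1, hg2, hg3⟩ := pack Rᶜ t C hC n _ hv
    exact fan_copy _ n t v g (fun i j => by simpa only [mem_neighborFinset] using hg1 i j) hg2 hg3
  push Not at hdeg
  have hcol : R.Colorable k := by
    apply colorable_of_cliqueFree_lt_minDegree hcf
    obtain ⟨j, rfl⟩ : ∃ j, k = j + 2 := ⟨k - 2, by omega⟩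
    have hmin : (j + 1) * (n * t) - C ≤ R.minDegree := by
      apply le_minDegree_of_forall_le_degree
      intro v
      have h1 := hdeg v
      rw [card_neighborFinset_eq_degree, degree_compl, Fintype.card_fin] at h1
      have : (j + 2) * n * t = (j + 1) * (n * t) + n * t := by ring
      omega
    refine lt_of_lt_of_le ?_ hmin
    have hnt : n ≤ n * t := Nat.le_mul_of_pos_right _ (by omega)
    rw [Nat.div_lt_iff_lt_mul (by omega), Fintype.card_fin]
    have e1 : 3 * (j + 2) - 4 = 3 * j + 2 := by omega
    have e2 : 3 * (j + 2) - 1 = 3 * j + 5 := by omega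
    rw [e1, e2]
    have hle : C ≤ (j + 1) * (n * t) := by nlinarith
    obtain ⟨d, hd⟩ := Nat.exists_eq_add_of_le hle
    rw [hd, Nat.add_sub_cancel_left]
    have h3 : (j + 2) * n * t = (j + 2) * (n * t) := by ring
    rw [h3]
    generalize n * t = m at *
    nlinarith
  obtain ⟨col⟩ := hcol
  obtain ⟨y, -, hy⟩ := Finset.exists_lt_card_fiber_of_mul_lt_card_of_maps_to
    (s := (Finset.univ : Finset (Fin (k * n * t + 1)))) (t := (Finset.univ : Finset (Fin k)))
    (f := col) (n := n * t) (fun _ _ => Finset.mem_univ _)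
    (by simp only [Finset.card_univ, Fintype.card_fin]; rw [← mul_assoc]; omega)
  set s := Finset.univ.filter (fun x => col x = y) with hs
  obtain ⟨v, hv⟩ : s.Nonempty := Finset.card_pos.1 (by omega)
  have hadj : ∀ a ∈ s, ∀ b ∈ s, a ≠ b → Rᶜ.Adj a b := by
    intro a ha b hb hab
    rw [compl_adj]
    refine ⟨hab, fun h => col.valid h ?_⟩
    rw [(Finset.mem_filter.1 ha).2, (Finset.mem_filter.1 hb).2]
  have hcard : Fintype.card (Fin n × Fin t) ≤ Fintype.card (s.erase v) := by
    rw [Fintype.card_prod, Fintype.card_fin, Fintype.card_fin, Fintype.card_coe,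
      Finset.card_erase_of_mem hv]
    omega
  obtain ⟨e⟩ := Function.Embedding.nonempty_of_card_le hcard
  refine fan_copy _ n t v (fun i j => (e (i, j) : Fin _)) ?_ ?_ ?_
  · intro i j
    have := Finset.mem_erase.1 (e (i, j)).2
    exact hadj _ hv _ this.2 this.1.symm
  · intro i j i' j' h
    have := e.injective (Subtype.ext h)
    simpa using this
  · intro i j j' hj
    refine hadj _ (Finset.mem_of_mem_erase (e (i, j)).2) _ (Finset.mem_of_mem_erase (e (i, j')).2) ?_
    intro h
    have := e.injective (Subtype.ext h)
    exact hj (by simpa using this)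

lemma lower (k t n N : ℕ) (hN : N ≤ k * n * t) :
    ¬ arrows N (completeGraph (Fin (k + 1))) (genFan n t) := by
  classical
  intro h
  let R : SimpleGraph (Fin N) := SimpleGraph.fromRel (fun a b => a.1 / (n * t) ≠ b.1 / (n * t))
  have hR : ∀ a b, R.Adj a b ↔ a.1 / (n * t) ≠ b.1 / (n * t) := by
    intro a b
    simp only [R, fromRel_adj]
    constructor
    · rintro ⟨_, h | h⟩
      · exact h
      · exact h.symm
    · intro h
      exact ⟨fun hab => h (by rw [hab]), Or.inl h⟩
  rcases h R with ⟨f, hf⟩ | ⟨f, hf⟩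
  · have hlt : ∀ a : Fin N, a.1 / (n * t) < k := fun a =>
      Nat.div_lt_of_lt_mul (by have := a.2; rw [mul_assoc, mul_comm] at hN; omega)
    obtain ⟨a, b, hab, hfab⟩ := Fintype.exists_ne_map_eq_of_card_lt
      (fun a => (⟨_, hlt (f a)⟩ : Fin k)) (by simp)
    have := f.map_adj (show (completeGraph (Fin (k + 1))).Adj a b from hab)
    rw [hR] at this
    exact this (by simpa using hfab)
  · have hq : ∀ o, (f o).1 / (n * t) = (f none).1 / (n * t) := by
      intro o
      by_cases ho : o = none
      · rw [ho]
      have := f.map_adj (show (genFan n t).Adj none o from ⟨Ne.symm ho, Or.inl (Or.inl rfl)⟩)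
      rw [compl_adj, hR] at this
      exact (not_not.1 this.2).symm
    have hpos : 0 < n * t := by
      by_contra hz
      have h0 : n * t = 0 := by omega
      rw [mul_assoc, h0] at hN
      have := (f none).2
      omega
    obtain ⟨a, b, hab, hfab⟩ := Fintype.exists_ne_map_eq_of_card_lt
      (fun o => (⟨(f o).1 % (n * t), Nat.mod_lt _ hpos⟩ : Fin (n * t))) (by simp)
    apply hab
    apply hf
    apply Fin.ext
    rw [← Nat.div_add_mod (f a).1 (n * t), ← Nat.div_add_mod (f b).1 (n * t), hq a, hq b]
    have : (f a).1 % (n * t) = (f b).1 % (n * t) := by simpa using hfab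
    rw [this]

end FanRamsey

theorem statement_14 (k t : ℕ) (hk : 2 ≤ k) (ht : 2 ≤ t) :
    ∃ n₀ : ℕ, ∀ n : ℕ, n₀ ≤ n →
      ramseyNumber (completeGraph (Fin (k + 1))) (genFan n t) = k * n * t + 1 := by
  refine ⟨3 * k * (2 ^ (k + 1 + t) + 1), fun n hn => ?_⟩
  unfold ramseyNumber
  apply le_antisymm
  · exact Nat.sInf_le ⟨Nat.succ_pos _, FanRamsey.upper k t n hk ht hn⟩
  · refine le_csInf ⟨_, Nat.succ_pos _, FanRamsey.upper k t n hk ht hn⟩ ?_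
    rintro N ⟨-, hN⟩
    by_contra hlt
    exact FanRamsey.lower k t n N (by omega) hN
end

section
/- Let m ≥ 1 and t ≥ 2 be fixed integers. Then there exists n₀ such that for all integers n ≥ n₀, the Ramsey number satisfies R(C_{2m+1}, K₁ + nK_t) = 2·n·t + 1, where C_{2m+1} is the cycle on 2m + 1 vertices. -/
open SimpleGraph

open Classical in
lemma cycle_of_fun {V : Type*} (R : SimpleGraph V) (k : ℕ) (hk : 2 ≤ k) (h : ℕ → V)
    (inj : ∀ i j, i < k + 1 → j < k + 1 → h i = h j → i = j)
    (adj : ∀ i, i < k → R.Adj (h i) (h (i + 1))) (hl : R.Adj (h k) (h 0)) :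
    containsCopy R (SimpleGraph.cycleGraph (k + 1)) := by
  have key : ∀ u v : Fin (k + 1), (u - v).val = 1 → R.Adj (h v.val) (h u.val) := by
    intro u v huv
    have hu := u.isLt
    have hv := v.isLt
    rw [Fin.sub_def] at huv
    simp only at huv
    by_cases hc : v.val ≤ u.val
    · have : (k + 1 - v.val + u.val) = (u.val - v.val) + (k + 1) := by omega
      rw [this, Nat.add_mod_right, Nat.mod_eq_of_lt (by omega)] at huv
      have e : u.val = v.val + 1 := by omega
      rw [e]
      exact adj _ (by omega)
    · rw [Nat.mod_eq_of_lt (by omega)] at huv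
      have e1 : u.val = 0 := by omega
      have e2 : v.val = k := by omega
      rw [e1, e2]
      exact hl
  refine ⟨⟨fun i => h i.val, ?_⟩, ?_⟩
  · intro u v huv
    rw [SimpleGraph.cycleGraph_adj'] at huv
    rcases huv with h1 | h1
    · exact (key _ _ h1).symm
    · exact key _ _ h1
  · intro u v huv
    exact Fin.ext (inj _ _ u.isLt v.isLt huv)

open Classical in
lemma path_of_mindeg {V : Type*} (R : SimpleGraph V) (S : Finset V) (d : ℕ) (hS : S.Nonempty)
    (hd : ∀ a ∈ S, d ≤ (S.filter (R.Adj a)).card) :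
    ∀ k, k ≤ d → ∃ g : ℕ → V, (∀ i, i ≤ k → g i ∈ S) ∧
      (∀ i j, i ≤ k → j ≤ k → g i = g j → i = j) ∧ (∀ i, i < k → R.Adj (g i) (g (i + 1))) := by
  intro k
  induction k with
  | zero =>
    intro _
    obtain ⟨a, ha⟩ := hS
    exact ⟨fun _ => a, fun _ _ => ha, fun i j hi hj _ => by omega, fun i hi => by omega⟩
  | succ k ih =>
    intro hk
    obtain ⟨g, g1, g2, g3⟩ := ih (by omega)
    have hdk := hd (g k) (g1 k le_rfl)
    have : ∃ b ∈ S.filter (R.Adj (g k)), b ∉ (Finset.range k).image g := by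
      apply Finset.exists_mem_notMem_of_card_lt_card
      have := Finset.card_image_le (s := Finset.range k) (f := g)
      rw [Finset.card_range] at this
      omega
    obtain ⟨b, hb, hb2⟩ := this
    rw [Finset.mem_filter] at hb
    have hne : ∀ i, i ≤ k → g i ≠ b := by
      intro i hi e
      rcases Nat.lt_or_ge i k with h | h
      · exact hb2 (Finset.mem_image.2 ⟨i, Finset.mem_range.2 h, e⟩)
      · have : i = k := by omega
        subst this
        exact hb.2.ne e
    refine ⟨fun i => if i ≤ k then g i else b, ?_, ?_, ?_⟩
    · intro i hi
      by_cases h : i ≤ k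
      · simp only [h, if_true]; exact g1 i h
      · simp only [h, if_false]; exact hb.1
    · intro i j hi hj e
      by_cases h : i ≤ k <;> by_cases h' : j ≤ k <;> simp only [h, h', if_true, if_false] at e
      · exact g2 i j h h' e
      · exact absurd e (hne i h)
      · exact absurd e.symm (hne j h')
      · omega
    · intro i hi
      by_cases h : i + 1 ≤ k
      · have h' : i ≤ k := by omega
        simp only [h, h', if_true]
        exact g3 i (by omega)
      · have h' : i = k := by omega
        subst h'
        simp only [le_refl, h, if_true, if_false]
        exact hb.2

open Classical in
lemma nbhd_degenerate {V : Type*} (R : SimpleGraph V) (m : ℕ) (hm : 1 ≤ m)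
    (hR : ¬ containsCopy R (SimpleGraph.cycleGraph (2 * m + 1))) (x : V) (S : Finset V)
    (hS : S.Nonempty) (hx : ∀ a ∈ S, R.Adj x a) :
    ∃ a ∈ S, (S.filter (R.Adj a)).card ≤ 2 * m := by
  by_contra hcon
  push Not at hcon
  obtain ⟨g, g1, g2, g3⟩ := path_of_mindeg R S (2 * m) hS (fun a ha => (hcon a ha).le)
    (2 * m - 1) (by omega)
  apply hR
  apply cycle_of_fun R (2 * m) (by omega) (fun i => if i = 0 then x else g (i - 1))
  · intro i j hi hj e
    by_cases h : i = 0 <;> by_cases h' : j = 0 <;> simp only [h, h', if_true, if_false] at e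
    · omega
    · exact absurd e (hx _ (g1 (j - 1) (by omega))).ne
    · exact absurd e.symm (hx _ (g1 (i - 1) (by omega))).ne
    · have := g2 _ _ (by omega) (by omega) e
      omega
  · intro i hi
    by_cases h : i = 0
    · subst h
      simp only [if_true]
      exact hx _ (g1 _ (by omega))
    · have := g3 (i - 1) (by omega)
      rw [Nat.sub_add_cancel (by omega)] at this
      simpa [h] using this
  · have h : 2 * m ≠ 0 := by omega
    simp only [h, if_true, if_false]
    exact (hx _ (g1 _ (by omega))).symm

open Classical in
lemma degsum {V : Type*} (R : SimpleGraph V) (m : ℕ) (hm : 1 ≤ m)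
    (hR : ¬ containsCopy R (SimpleGraph.cycleGraph (2 * m + 1))) (x : V) (k : ℕ) :
    ∀ S : Finset V, S.card = k → (∀ a ∈ S, R.Adj x a) →
    ∑ a ∈ S, (S.filter (R.Adj a)).card ≤ 4 * m * S.card := by
  induction k with
  | zero =>
    intro S h _
    rw [Finset.card_eq_zero] at h
    subst h
    simp
  | succ k ih =>
    intro S hk hx
    have hS : S.Nonempty := by
      rw [← Finset.card_pos]; omega
    obtain ⟨a, ha, hda⟩ := nbhd_degenerate R m hm hR x S hS hx
    have hc := Finset.card_erase_of_mem ha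
    have h1 := ih (S.erase a) (by omega) (fun b hb => hx b (Finset.mem_of_mem_erase hb))
    rw [← Finset.add_sum_erase S _ ha]
    have h2 : ∀ b ∈ S.erase a, (S.filter (R.Adj b)).card
        = ((S.erase a).filter (R.Adj b)).card + (if R.Adj a b then 1 else 0) := by
      intro b hb
      conv_lhs => rw [← Finset.insert_erase ha]
      rw [Finset.filter_insert]
      by_cases hab : R.Adj a b
      · rw [if_pos hab.symm, if_pos hab, Finset.card_insert_of_notMem (by simp)]
      · rw [if_neg (fun h => hab h.symm), if_neg hab, Nat.add_zero]
    rw [Finset.sum_congr rfl h2, Finset.sum_add_distrib, ← Finset.card_filter]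
    have h3 : ((S.erase a).filter (R.Adj a)).card ≤ (S.filter (R.Adj a)).card :=
      Finset.card_le_card (Finset.filter_subset_filter _ (Finset.erase_subset _ _))
    have h4 : S.card = (S.erase a).card + 1 := by omega
    rw [h4]
    nlinarith

open Classical in
lemma cycle_of_bip {V : Type*} (R : SimpleGraph V) (m : ℕ) (hm : 1 ≤ m) (X Y : Finset V)
    (hX : X.card = m) (hY : Y.card = m) (hXY : ∀ a ∈ X, ∀ b ∈ Y, R.Adj a b) (v x y : V)
    (hvX : v ∉ X) (hvY : v ∉ Y) (hx : x ∈ X) (hy : y ∈ Y) (vx : R.Adj v x) (vy : R.Adj v y) :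
    containsCopy R (SimpleGraph.cycleGraph (2 * m + 1)) := by
  -- enumerations
  have enum : ∀ (Z : Finset V), Z.card = m → ∀ z ∈ Z, ∀ k, k < m →
      ∃ f : ℕ → V, (∀ i, i < m → f i ∈ Z) ∧ (∀ i j, i < m → j < m → f i = f j → i = j) ∧
        f k = z := by
    intro Z hZ z hz k hk
    let e : Fin m ≃ Z := (Z.equivFinOfCardEq hZ).symm
    let e' : Fin m ≃ Z := (Equiv.swap ⟨k, hk⟩ (e.symm ⟨z, hz⟩)).trans e
    refine ⟨fun i => if h : i < m then (e' ⟨i, h⟩ : V) else v, ?_, ?_, ?_⟩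
    · intro i hi
      simp only [hi, dif_pos]
      exact (e' ⟨i, hi⟩).2
    · intro i j hi hj h
      simp only [hi, hj, dif_pos] at h
      have := e'.injective (Subtype.ext h)
      simpa using this
    · simp only [hk, dif_pos]
      simp [e']
  obtain ⟨f, f1, f2, f3⟩ := enum X hX x hx (m - 1) (by omega)
  obtain ⟨g, g1, g2, g3⟩ := enum Y hY y hy 0 (by omega)
  have ne : ∀ a ∈ X, ∀ b ∈ Y, a ≠ b := fun a ha b hb => (hXY a ha b hb).ne
  have nvf : ∀ i, i < m → f i ≠ v := fun i hi e => hvX (e ▸ f1 i hi)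
  have nvg : ∀ i, i < m → g i ≠ v := fun i hi e => hvY (e ▸ g1 i hi)
  -- `h 0 = v`, `h (2 i + 1) = g i`, `h (2 i + 2) = f i`
  let h : ℕ → V := fun i => if i = 0 then v else if i % 2 = 1 then g (i / 2) else f (i / 2 - 1)
  have h0 : h 0 = v := by simp [h]
  have hodd : ∀ i, h (2 * i + 1) = g i := by
    intro i
    have e1 : 2 * i + 1 ≠ 0 := by omega
    have e2 : (2 * i + 1) % 2 = 1 := by omega
    have e3 : (2 * i + 1) / 2 = i := by omega
    simp only [h, e1, e2, e3, if_true, if_false]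
  have heven : ∀ i, h (2 * i + 2) = f i := by
    intro i
    have e1 : 2 * i + 2 ≠ 0 := by omega
    have e2 : ¬ (2 * i + 2) % 2 = 1 := by omega
    have e3 : (2 * i + 2) / 2 - 1 = i := by omega
    simp only [h, e1, e2, e3, if_false]
  have cases3 : ∀ i, i = 0 ∨ (∃ j, i = 2 * j + 1) ∨ (∃ j, i = 2 * j + 2) := by
    intro i
    rcases Nat.eq_zero_or_pos i with h | h
    · exact Or.inl h
    · rcases Nat.even_or_odd' i with ⟨j, hj | hj⟩
      · exact Or.inr (Or.inr ⟨j - 1, by omega⟩)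
      · exact Or.inr (Or.inl ⟨j, hj⟩)
  apply cycle_of_fun R (2 * m) (by omega) h
  · intro i j hi hj e
    rcases cases3 i with rfl | ⟨a, rfl⟩ | ⟨a, rfl⟩ <;>
      rcases cases3 j with rfl | ⟨b, rfl⟩ | ⟨b, rfl⟩ <;>
      simp only [h0, hodd, heven] at e
    · rfl
    · exact absurd e.symm (nvg _ (by omega))
    · exact absurd e.symm (nvf _ (by omega))
    · exact absurd e (nvg _ (by omega))
    · have := g2 _ _ (by omega) (by omega) e
      omega
    · exact absurd e.symm (ne _ (f1 _ (by omega)) _ (g1 _ (by omega)))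
    · exact absurd e (nvf _ (by omega))
    · exact absurd e (ne _ (f1 _ (by omega)) _ (g1 _ (by omega)))
    · have := f2 _ _ (by omega) (by omega) e
      omega
  · intro i hi
    rcases cases3 i with rfl | ⟨a, rfl⟩ | ⟨a, rfl⟩
    · have := hodd 0
      simp only [Nat.mul_zero, Nat.zero_add] at this ⊢
      rw [h0, this, g3]
      exact vy
    · rw [hodd, show 2 * a + 1 + 1 = 2 * a + 2 from rfl, heven]
      exact (hXY _ (f1 _ (by omega)) _ (g1 _ (by omega))).symm
    · rw [heven, show 2 * a + 2 + 1 = 2 * (a + 1) + 1 from rfl, hodd]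
      exact hXY _ (f1 _ (by omega)) _ (g1 _ (by omega))
  · have := heven (m - 1)
    rw [show 2 * (m - 1) + 2 = 2 * m by omega] at this
    rw [this, h0, f3]
    exact vx.symm

open Classical in
lemma ramsey_fin (a : ℕ) : ∀ b : ℕ, ∃ c : ℕ, ∀ {V : Type} (R : SimpleGraph V) (S : Finset V),
    c ≤ S.card → (∃ T ⊆ S, T.card = a ∧ ∀ x ∈ T, ∀ y ∈ T, x ≠ y → R.Adj x y) ∨
      (∃ T ⊆ S, T.card = b ∧ ∀ x ∈ T, ∀ y ∈ T, ¬ R.Adj x y) := by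
  induction a with
  | zero => 
    intro b
    exact ⟨0, fun R S _ => Or.inl ⟨∅, by simp, by simp, by simp⟩⟩
  | succ a iha =>
    intro b
    induction b with
    | zero => exact ⟨0, fun R S _ => Or.inr ⟨∅, by simp, by simp, by simp⟩⟩
    | succ b ihb =>
      obtain ⟨c1, h1⟩ := iha (b + 1)
      obtain ⟨c2, h2⟩ := ihb
      refine ⟨c1 + c2 + 1, ?_⟩
      intro V R S hS
      have hne : S.Nonempty := by rw [← Finset.card_pos]; omega
      obtain ⟨v, hv⟩ := hne
      have hc := Finset.card_erase_of_mem hv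
      have hsplit := Finset.card_filter_add_card_filter_not (s := S.erase v) (R.Adj v)
      by_cases hA : c1 ≤ ((S.erase v).filter (R.Adj v)).card
      · rcases h1 R _ hA with ⟨T, hT, hTc, hTa⟩ | ⟨T, hT, hTc, hTa⟩
        · left
          have hTv : ∀ x ∈ T, R.Adj v x := fun x hx => (Finset.mem_filter.1 (hT hx)).2
          have hTS : T ⊆ S := fun x hx =>
            Finset.mem_of_mem_erase (Finset.mem_filter.1 (hT hx)).1
          refine ⟨insert v T, Finset.insert_subset hv hTS, ?_, ?_⟩
          · rw [Finset.card_insert_of_notMem (fun h => (hTv v h).ne rfl), hTc]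
          · intro x hx y hy hxy
            rw [Finset.mem_insert] at hx hy
            rcases hx with rfl | hx <;> rcases hy with rfl | hy
            · exact absurd rfl hxy
            · exact hTv y hy
            · exact (hTv x hx).symm
            · exact hTa x hx y hy hxy
        · right
          exact ⟨T, fun x hx => Finset.mem_of_mem_erase (Finset.mem_filter.1 (hT hx)).1, hTc, hTa⟩
      · have hB : c2 ≤ ((S.erase v).filter (fun w => ¬ R.Adj v w)).card := by omega
        rcases h2 R _ hB with ⟨T, hT, hTc, hTa⟩ | ⟨T, hT, hTc, hTa⟩
        · left
          exact ⟨T, fun x hx => Finset.mem_of_mem_erase (Finset.mem_filter.1 (hT hx)).1, hTc, hTa⟩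
        · right
          have hTv : ∀ x ∈ T, ¬ R.Adj v x := fun x hx => (Finset.mem_filter.1 (hT hx)).2
          have hTS : T ⊆ S := fun x hx =>
            Finset.mem_of_mem_erase (Finset.mem_filter.1 (hT hx)).1
          have hvT : v ∉ T := fun h =>
            Finset.notMem_erase v S (Finset.mem_filter.1 (hT h)).1
          refine ⟨insert v T, Finset.insert_subset hv hTS, ?_, ?_⟩
          · rw [Finset.card_insert_of_notMem hvT, hTc]
          · intro x hx y hy
            rw [Finset.mem_insert] at hx hy
            rcases hx with rfl | hx <;> rcases hy with rfl | hy
            · exact R.loopless.irrefl _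
            · exact hTv y hy
            · exact fun h => hTv x hx h.symm
            · exact hTa x hx y hy

open Classical in
lemma indep_exists (m t : ℕ) (hm : 1 ≤ m) : ∃ c : ℕ, ∀ {V : Type} (R : SimpleGraph V),
    ¬ containsCopy R (SimpleGraph.cycleGraph (2 * m + 1)) → ∀ (S : Finset V),
    c ≤ S.card → ∃ T ⊆ S, T.card = t ∧ ∀ x ∈ T, ∀ y ∈ T, ¬ R.Adj x y := by
  obtain ⟨c, hc⟩ := ramsey_fin (2 * m + 1) t
  refine ⟨c, fun R hR S hS => ?_⟩
  rcases hc R S hS with ⟨T, hT, hTc, hTa⟩ | h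
  · exfalso
    apply hR
    let e := (T.equivFinOfCardEq hTc).symm
    refine ⟨⟨fun i => (e i : _), ?_⟩, ?_⟩
    · intro u v huv
      exact hTa _ (e u).2 _ (e v).2 (fun h => huv.ne (e.injective (Subtype.ext h)))
    · intro u v h
      exact e.injective (Subtype.ext h)
  · exact h

open Classical in
lemma packing {V : Type*} (R : SimpleGraph V) (t c : ℕ)
    (hc : ∀ (S : Finset V), c ≤ S.card →
      ∃ T ⊆ S, T.card = t ∧ ∀ x ∈ T, ∀ y ∈ T, ¬ R.Adj x y) (n : ℕ) :
    ∀ S : Finset V, n * t + c ≤ S.card →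
      ∃ F : ℕ → Finset V, (∀ i, i < n → F i ⊆ S ∧ (F i).card = t ∧
        ∀ x ∈ F i, ∀ y ∈ F i, ¬ R.Adj x y) ∧
        (∀ i j, i < n → j < n → i ≠ j → Disjoint (F i) (F j)) := by
  induction n with
  | zero => exact fun S _ => ⟨fun _ => ∅, fun i hi => by omega, fun i j hi => by omega⟩
  | succ n ih =>
    intro S hS
    rw [Nat.succ_mul] at hS
    obtain ⟨T, hT, hTc, hTa⟩ := hc S (by omega)
    have hcard := Finset.card_sdiff_of_subset hT
    obtain ⟨F, F1, F2⟩ := ih (S \ T) (by omega)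
    have hd : ∀ i, i < n → Disjoint (F i) T := fun i hi =>
      Finset.disjoint_of_subset_left (F1 i hi).1 Finset.sdiff_disjoint
    refine ⟨fun i => if i < n then F i else T, ?_, ?_⟩
    · intro i hi
      by_cases h : i < n
      · simp only [h, if_true]
        exact ⟨(F1 i h).1.trans Finset.sdiff_subset, (F1 i h).2⟩
      · simp only [h, if_false]
        exact ⟨hT, hTc, hTa⟩
    · intro i j hi hj hij
      by_cases h : i < n <;> by_cases h' : j < n <;> simp only [h, h', if_true, if_false]
      · exact F2 i j h h' hij
      · exact hd i h
      · exact (hd j h').symm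
      · omega

lemma fan_of {V : Type*} (R : SimpleGraph V) (n t : ℕ) (v : V) (f : Fin n × Fin t → V)
    (hf : Function.Injective f) (hv : ∀ p, v ≠ f p ∧ ¬ R.Adj v (f p))
    (h : ∀ p q : Fin n × Fin t, p.1 = q.1 → ¬ R.Adj (f p) (f q)) :
    containsCopy Rᶜ (genFan n t) := by
  refine ⟨⟨fun o => o.elim v f, ?_⟩, ?_⟩
  · intro a b hab
    rw [genFan, SimpleGraph.fromRel_adj] at hab
    rw [SimpleGraph.compl_adj]
    obtain ⟨hne, hab⟩ := hab
    cases a with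
    | none =>
      cases b with
      | none => exact absurd rfl hne
      | some q => exact hv q
    | some p =>
      cases b with
      | none => exact ⟨(hv p).1.symm, fun hh => (hv p).2 hh.symm⟩
      | some q =>
        refine ⟨fun e => hne (congrArg some (hf e)), h p q ?_⟩
        rcases hab with (h1 | ⟨p', q', h1, h2, h3⟩) | (h1 | ⟨p', q', h1, h2, h3⟩)
        · exact absurd h1 (by simp)
        · cases h1; cases h2; exact h3
        · exact absurd h1 (by simp)
        · cases h1; cases h2; exact h3.symm
  · intro a b hab
    cases a with
    | none =>
      cases b with
      | none => rfl
      | some q => exact absurd hab (hv q).1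
    | some p =>
      cases b with
      | none => exact absurd hab.symm (hv p).1
      | some q => exact congrArg some (hf hab)

open Classical in
lemma fan_of_packing {V : Type*} (R : SimpleGraph V) (n t : ℕ) (v : V) (F : ℕ → Finset V)
    (S : Finset V) (hS : ∀ w ∈ S, v ≠ w ∧ ¬ R.Adj v w)
    (F1 : ∀ i, i < n → F i ⊆ S ∧ (F i).card = t ∧ ∀ x ∈ F i, ∀ y ∈ F i, ¬ R.Adj x y)
    (F2 : ∀ i j, i < n → j < n → i ≠ j → Disjoint (F i) (F j)) :
    containsCopy Rᶜ (genFan n t) := by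
  let e : ∀ i : Fin n, Fin t ≃ F i := fun i =>
    ((F i).equivFinOfCardEq (F1 i i.isLt).2.1).symm
  apply fan_of R n t v (fun p => (e p.1 p.2 : V))
  · rintro ⟨i, j⟩ ⟨i', j'⟩ h
    simp only at h
    by_cases hi : i = i'
    · subst hi
      rw [(e i).injective (Subtype.ext h)]
    · exfalso
      have hd := F2 i i' i.isLt i'.isLt (fun h => hi (Fin.ext h))
      exact Finset.disjoint_left.1 hd (e i j).2 (h ▸ (e i' j').2)
  · intro p
    exact hS _ ((F1 p.1 p.1.isLt).1 (e p.1 p.2).2)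
  · rintro ⟨i, j⟩ ⟨i', j'⟩ h
    simp only at h
    subst h
    exact (F1 i i.isLt).2.2 _ (e i j).2 _ (e i j').2

open Classical in
lemma fan_of_indep {V : Type*} (R : SimpleGraph V) (n t : ℕ) (P : Finset V)
    (hP : n * t + 1 ≤ P.card) (hI : ∀ x ∈ P, ∀ y ∈ P, ¬ R.Adj x y) :
    containsCopy Rᶜ (genFan n t) := by
  have : P.Nonempty := by rw [← Finset.card_pos]; omega
  obtain ⟨v, hv⟩ := this
  have hc := Finset.card_erase_of_mem hv
  obtain ⟨Q, hQ, hQc⟩ := Finset.exists_subset_card_eq (s := P.erase v) (n := n * t) (by omega)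
  let e : Fin n × Fin t ≃ Q := finProdFinEquiv.trans (Q.equivFinOfCardEq hQc).symm
  have he : ∀ p, (e p : V) ∈ P.erase v := fun p => hQ (e p).2
  apply fan_of R n t v (fun p => (e p : V))
  · intro p q h
    exact e.injective (Subtype.ext h)
  · intro p
    exact ⟨(Finset.ne_of_mem_erase (he p)).symm, hI _ hv _ (Finset.mem_of_mem_erase (he p))⟩
  · intro p q _
    exact hI _ (Finset.mem_of_mem_erase (he p)) _ (Finset.mem_of_mem_erase (he q))

open Classical in
lemma common_nbrs {V : Type*} (R : SimpleGraph V) (A B : Finset V) (K : ℕ)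
    (hK : ∀ a ∈ A, (B.filter (fun b => ¬ R.Adj a b)).card ≤ K) (X T : Finset V) (hX : X ⊆ A)
    (hT : T ⊆ B) (j : ℕ) (hj : X.card * K + j ≤ T.card) :
    ∃ Y ⊆ T, Y.card = j ∧ ∀ a ∈ X, ∀ b ∈ Y, R.Adj a b := by
  have h1 : (X.biUnion (fun a => B.filter (fun b => ¬ R.Adj a b))).card ≤ X.card * K :=
    Finset.card_biUnion_le_card_mul _ _ _ (fun a ha => hK a (hX ha))
  have h2 := Finset.le_card_sdiff (X.biUnion (fun a => B.filter (fun b => ¬ R.Adj a b))) T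
  obtain ⟨Y, hY, hYc⟩ := Finset.exists_subset_card_eq
    (s := T \ X.biUnion (fun a => B.filter (fun b => ¬ R.Adj a b))) (n := j) (by omega)
  refine ⟨Y, hY.trans Finset.sdiff_subset, hYc, ?_⟩
  intro a ha b hb
  by_contra hab
  have hb' := Finset.mem_sdiff.1 (hY hb)
  exact hb'.2 (Finset.mem_biUnion.2 ⟨a, ha, Finset.mem_filter.2 ⟨hT hb'.1, hab⟩⟩)

open Classical in
lemma card_inter_ge {V : Type*} (R : SimpleGraph V) (B : Finset V) (u v : V) :
    (B.filter (R.Adj u)).card + (B.filter (R.Adj v)).card ≤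
      B.card + (B.filter (R.Adj u) ∩ B.filter (R.Adj v)).card := by
  have h1 := Finset.card_union_add_card_inter (B.filter (R.Adj u)) (B.filter (R.Adj v))
  have h2 : (B.filter (R.Adj u) ∪ B.filter (R.Adj v)).card ≤ B.card :=
    Finset.card_le_card (Finset.union_subset (Finset.filter_subset _ _) (Finset.filter_subset _ _))
  omega

open Classical in
lemma bip_main (m c : ℕ) (hm : 1 ≤ m) : ∃ M0 : ℕ, ∀ M, M0 ≤ M → ∀ {V : Type} [Fintype V]
    (R : SimpleGraph V), Fintype.card V = 2 * M + 1 →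
    ¬ containsCopy R (SimpleGraph.cycleGraph (2 * m + 1)) →
    (∀ v, M < ((Finset.univ : Finset V).filter (R.Adj v)).card + c) →
    ∃ P : Finset V, (∀ x ∈ P, ∀ y ∈ P, ¬ R.Adj x y) ∧ (∀ x ∉ P, ∀ y ∉ P, ¬ R.Adj x y) := by
  obtain ⟨D, hD⟩ : ∃ D, D = 160 * m := ⟨_, rfl⟩
  obtain ⟨K, hK⟩ : ∃ K, K = 2 * c + D := ⟨_, rfl⟩
  obtain ⟨L, hL⟩ : ∃ L, L = m * K + m + 2 := ⟨_, rfl⟩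
  refine ⟨100 * (c + D + L + m + 1), ?_⟩
  intro M hM V _ R hV hR hdeg
  have hne : Nonempty V := by
    rw [← Fintype.card_pos_iff]; omega
  obtain ⟨x⟩ := hne
  obtain ⟨A, hA⟩ : ∃ A, A = (Finset.univ : Finset V).filter (R.Adj x) := ⟨_, rfl⟩
  have hxA : ∀ a ∈ A, R.Adj x a := by
    intro a ha
    rw [hA, Finset.mem_filter] at ha
    exact ha.2
  obtain ⟨B, hB⟩ : ∃ B, B = Aᶜ := ⟨_, rfl⟩
  have hAB : A.card + B.card = 2 * M + 1 := by
    rw [hB, Finset.card_add_card_compl, hV]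
  have hAc : M < A.card + c := by rw [hA]; exact hdeg x
  -- degrees split
  have hsplit : ∀ v, M < (A.filter (R.Adj v)).card + (B.filter (R.Adj v)).card + c := by
    intro v
    have h := hdeg v
    have : (Finset.univ : Finset V).filter (R.Adj v) = A.filter (R.Adj v) ∪ B.filter (R.Adj v) := by
      rw [← Finset.filter_union, hB, Finset.union_compl]
    rw [this] at h
    have := Finset.card_union_le (A.filter (R.Adj v)) (B.filter (R.Adj v))
    omega
  obtain ⟨A', hA'⟩ : ∃ A', A' = A.filter (fun a => (A.filter (R.Adj a)).card ≤ D) := ⟨_, rfl⟩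
  obtain ⟨H, hH⟩ : ∃ H, H = A.filter (fun a => ¬ (A.filter (R.Adj a)).card ≤ D) := ⟨_, rfl⟩
  have hA'A : A' ⊆ A := by rw [hA']; exact Finset.filter_subset _ _
  have hA'H : A'.card + H.card = A.card := by
    rw [hA', hH]
    exact Finset.card_filter_add_card_filter_not _
  have hHc : 40 * H.card ≤ A.card := by
    have h1 := degsum R m hm hR x A.card A rfl hxA
    have h2 : ∑ a ∈ H, (A.filter (R.Adj a)).card ≤ ∑ a ∈ A, (A.filter (R.Adj a)).card :=
      Finset.sum_le_sum_of_subset (by rw [hH]; exact Finset.filter_subset _ _)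
    have h3 : H.card * D ≤ ∑ a ∈ H, (A.filter (R.Adj a)).card := by
      rw [← smul_eq_mul]
      apply Finset.card_nsmul_le_sum
      intro a ha
      rw [hH, Finset.mem_filter] at ha
      omega
    rw [hD] at h3
    have h4 : (4 * m) * (40 * H.card) ≤ (4 * m) * A.card := by nlinarith
    exact Nat.le_of_mul_le_mul_left h4 (by omega)
  have hsplit' : ∀ v, (A.filter (R.Adj v)).card ≤ (A'.filter (R.Adj v)).card + H.card := by
    intro v
    have h1 : A.filter (R.Adj v) ⊆ A'.filter (R.Adj v) ∪ H := by
      intro a ha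
      rw [Finset.mem_filter] at ha
      rw [Finset.mem_union, hA', hH, Finset.mem_filter, Finset.mem_filter, Finset.mem_filter]
      tauto
    exact (Finset.card_le_card h1).trans (Finset.card_union_le _ _)
  have hmiss : ∀ a ∈ A', (B.filter (fun b => ¬ R.Adj a b)).card ≤ K := by
    intro a ha
    rw [hA', Finset.mem_filter] at ha
    have h1 := hsplit a
    have h2 := Finset.card_filter_add_card_filter_not (s := B) (R.Adj a)
    have h3 := ha.2
    omega
  have hBc : M < B.card + c + D := by
    have : A'.Nonempty := by rw [← Finset.card_pos]; omega
    obtain ⟨a, ha⟩ := this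
    rw [hA', Finset.mem_filter] at ha
    have h1 := hsplit a
    have h2 := Finset.card_filter_le B (R.Adj a)
    have h3 := ha.2
    omega
  have hdisj : ∀ a ∈ A', a ∉ B := by
    intro a ha hb
    rw [hB, Finset.mem_compl] at hb
    exact hb (hA'A ha)
  have hone : ∀ v, L ≤ (B.filter (R.Adj v)).card → (A'.filter (R.Adj v)).card < m := by
    intro v hv
    by_contra hcon
    push Not at hcon
    obtain ⟨X, hX, hXc⟩ := Finset.exists_subset_card_eq hcon
    obtain ⟨Y, hY, hYc, hXY⟩ := common_nbrs R A' B K hmiss X (B.filter (R.Adj v))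
      (hX.trans (Finset.filter_subset _ _)) (Finset.filter_subset _ _) m (by rw [hXc]; omega)
    have vX : ∀ a ∈ X, R.Adj v a := fun a ha => (Finset.mem_filter.1 (hX ha)).2
    have vY : ∀ a ∈ Y, R.Adj v a := fun a ha => (Finset.mem_filter.1 (hY ha)).2
    obtain ⟨x1, hx1⟩ : X.Nonempty := by rw [← Finset.card_pos]; omega
    obtain ⟨y1, hy1⟩ : Y.Nonempty := by rw [← Finset.card_pos]; omega
    exact hR (cycle_of_bip R m hm X Y hXc hYc hXY v x1 y1 (fun h => (vX v h).ne rfl)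
      (fun h => (vY v h).ne rfl) hx1 hy1 (vX _ hx1) (vY _ hy1))
  have hpair : ∀ (T : Finset V) (u v : V), T.card ≤ (T \ {u, v}).card + 2 := by
    intro T u v
    have h1 := Finset.le_card_sdiff {u, v} T
    have h2 : ({u, v} : Finset V).card ≤ 2 := Finset.card_le_two
    omega
  have hm1K : (m - 1) * K ≤ m * K := Nat.mul_le_mul_right _ (by omega)
  refine ⟨Finset.univ.filter (fun v => (B.filter (R.Adj v)).card < L), ?_, ?_⟩
  · intro u hu v hv huv
    rw [Finset.mem_filter] at hu hv
    have hu := hu.2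
    have hv := hv.2
    have u1 := hsplit u
    have u2 := hsplit' u
    have v1 := hsplit v
    have v2 := hsplit' v
    have hi := card_inter_ge R A' u v
    obtain ⟨X, hX, hXc⟩ := Finset.exists_subset_card_eq
      (s := A'.filter (R.Adj u) ∩ A'.filter (R.Adj v)) (n := m) (by omega)
    have hXA : X ⊆ A' := hX.trans (Finset.inter_subset_left.trans (Finset.filter_subset _ _))
    have hXu : ∀ a ∈ X, R.Adj u a := fun a ha =>
      (Finset.mem_filter.1 (Finset.mem_inter.1 (hX ha)).1).2
    have hXv : ∀ a ∈ X, R.Adj v a := fun a ha =>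
      (Finset.mem_filter.1 (Finset.mem_inter.1 (hX ha)).2).2
    have hp := hpair B u v
    obtain ⟨Y, hY, hYc, hXY⟩ := common_nbrs R A' B K hmiss X (B \ {u, v})
      hXA Finset.sdiff_subset (m - 1) (by rw [hXc]; omega)
    have huY : u ∉ Y := fun h => (Finset.mem_sdiff.1 (hY h)).2 (by simp)
    have hvY : v ∉ Y := fun h => (Finset.mem_sdiff.1 (hY h)).2 (by simp)
    obtain ⟨x1, hx1⟩ : X.Nonempty := by rw [← Finset.card_pos]; omega
    refine hR (cycle_of_bip R m hm X (insert u Y) hXc ?_ ?_ v x1 u (fun h => (hXv v h).ne rfl)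
      ?_ hx1 (Finset.mem_insert_self _ _) (hXv _ hx1) huv.symm)
    · rw [Finset.card_insert_of_notMem huY]; omega
    · intro a ha b hb
      rcases Finset.mem_insert.1 hb with rfl | hb
      · exact (hXu a ha).symm
      · exact hXY a ha b hb
    · intro h
      rcases Finset.mem_insert.1 h with h | h
      · exact huv.ne h.symm
      · exact hvY h
  · intro u hu v hv huv
    have hu : L ≤ (B.filter (R.Adj u)).card := by simpa using hu
    have hv : L ≤ (B.filter (R.Adj v)).card := by simpa using hv
    have u1 := hsplit u
    have u2 := hsplit' u
    have u3 := hone u hu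
    have v1 := hsplit v
    have v2 := hsplit' v
    have v3 := hone v hv
    have hi := card_inter_ge R B u v
    have hp := hpair A' u v
    obtain ⟨X, hX, hXc⟩ := Finset.exists_subset_card_eq
      (s := A' \ {u, v}) (n := m - 1) (by omega)
    obtain ⟨Y, hY, hYc, hXY⟩ := common_nbrs R A' B K hmiss X
      (B.filter (R.Adj u) ∩ B.filter (R.Adj v))
      (hX.trans Finset.sdiff_subset) (Finset.inter_subset_left.trans (Finset.filter_subset _ _))
      m (by rw [hXc]; omega)
    have hYu : ∀ a ∈ Y, R.Adj u a := fun a ha =>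
      (Finset.mem_filter.1 (Finset.mem_inter.1 (hY ha)).1).2
    have hYv : ∀ a ∈ Y, R.Adj v a := fun a ha =>
      (Finset.mem_filter.1 (Finset.mem_inter.1 (hY ha)).2).2
    have huX : u ∉ X := fun h => (Finset.mem_sdiff.1 (hX h)).2 (by simp)
    have hvX : v ∉ X := fun h => (Finset.mem_sdiff.1 (hX h)).2 (by simp)
    obtain ⟨y1, hy1⟩ : Y.Nonempty := by rw [← Finset.card_pos]; omega
    refine hR (cycle_of_bip R m hm (insert u X) Y ?_ hYc ?_ v u y1 ?_ (fun h => (hYv v h).ne rfl)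
      (Finset.mem_insert_self _ _) hy1 huv.symm (hYv _ hy1))
    · rw [Finset.card_insert_of_notMem huX]; omega
    · intro a ha b hb
      rcases Finset.mem_insert.1 ha with rfl | ha
      · exact hYu b hb
      · exact hXY a ha b hb
    · intro h
      rcases Finset.mem_insert.1 h with h | h
      · exact huv.ne h.symm
      · exact hvX h

open Classical in
lemma upper (m t : ℕ) (hm : 1 ≤ m) (ht : 2 ≤ t) : ∃ n₀ : ℕ, ∀ n : ℕ, n₀ ≤ n →
    arrows (2 * n * t + 1) (SimpleGraph.cycleGraph (2 * m + 1)) (genFan n t) := by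
  obtain ⟨c, hc⟩ := indep_exists m t hm
  obtain ⟨M0, hM0⟩ := bip_main m c hm
  refine ⟨M0, ?_⟩
  intro n hn R
  by_cases hR : containsCopy R (SimpleGraph.cycleGraph (2 * m + 1))
  · exact Or.inl hR
  right
  have hM : M0 ≤ n * t := hn.trans (Nat.le_mul_of_pos_right n (by omega))
  have hcard : Fintype.card (Fin (2 * n * t + 1)) = 2 * (n * t) + 1 := by
    rw [Fintype.card_fin, Nat.mul_assoc]
  by_cases hd : ∀ v, n * t < ((Finset.univ : Finset (Fin (2 * n * t + 1))).filter (R.Adj v)).card + c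
  · obtain ⟨P, hP, hQ⟩ := hM0 _ hM R hcard hR hd
    have h := Finset.card_add_card_compl P
    rw [hcard] at h
    by_cases h1 : n * t + 1 ≤ P.card
    · exact fan_of_indep R n t P h1 hP
    · exact fan_of_indep R n t Pᶜ (by omega) (fun x hx y hy =>
        hQ x (Finset.mem_compl.1 hx) y (Finset.mem_compl.1 hy))
  · push Not at hd
    obtain ⟨v, hv⟩ := hd
    have h1 := Finset.card_filter_add_card_filter_not
      (s := (Finset.univ : Finset (Fin (2 * n * t + 1)))) (R.Adj v)
    rw [Finset.card_univ, hcard] at h1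
    have hvm : v ∈ (Finset.univ : Finset (Fin (2 * n * t + 1))).filter (fun w => ¬ R.Adj v w) := by
      simp
    have h2 := Finset.card_erase_of_mem hvm
    obtain ⟨F, F1, F2⟩ := packing R t c (hc R hR) n
      (((Finset.univ : Finset (Fin (2 * n * t + 1))).filter (fun w => ¬ R.Adj v w)).erase v)
      (by omega)
    refine fan_of_packing R n t v F _ ?_ F1 F2
    intro w hw
    rw [Finset.mem_erase, Finset.mem_filter] at hw
    exact ⟨hw.1.symm, hw.2.2⟩

/-- The red graph is complete bipartite with parts `{i < k}` and `{i ≥ k}`. -/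
def bipRed (N k : ℕ) : SimpleGraph (Fin N) where
  Adj u v := ¬ (u.val < k ↔ v.val < k)
  symm := ⟨fun _ _ h h' => h h'.symm⟩
  loopless := ⟨fun _ h => h Iff.rfl⟩

lemma lower (m n t N : ℕ) (hN : N ≤ 2 * n * t) (hm : 1 ≤ m) :
    ¬ arrows N (SimpleGraph.cycleGraph (2 * m + 1)) (genFan n t) := by
  intro h
  rw [Nat.mul_assoc] at hN
  rcases h (bipRed N (n * t)) with ⟨f, hf⟩ | ⟨f, hf⟩
  · -- an odd cycle is not bipartite
    have step : ∀ i (hi : i + 1 < 2 * m + 1),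
        ¬ ((f ⟨i, by omega⟩).val < n * t ↔ (f ⟨i + 1, hi⟩).val < n * t) := by
      intro i hi
      have : (SimpleGraph.cycleGraph (2 * m + 1)).Adj ⟨i, by omega⟩ ⟨i + 1, hi⟩ := by
        rw [SimpleGraph.cycleGraph_adj']
        right
        rw [Fin.sub_def]
        simp only
        rw [show 2 * m + 1 - i + (i + 1) = 1 + (2 * m + 1) by omega, Nat.add_mod_right,
          Nat.mod_eq_of_lt (by omega)]
      exact f.map_adj this
    have par : ∀ i (hi : i < 2 * m + 1),
        ((f ⟨i, hi⟩).val < n * t ↔ (f ⟨0, by omega⟩).val < n * t) ↔ i % 2 = 0 := by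
      intro i
      induction i with
      | zero => intro hi; simp
      | succ i ih =>
        intro hi
        have h1 := ih (by omega)
        have h2 := step i hi
        have h3 : (i + 1) % 2 = 0 ↔ ¬ i % 2 = 0 := by omega
        rw [h3]
        tauto
    have hlast := par (2 * m) (by omega)
    have hadj : (SimpleGraph.cycleGraph (2 * m + 1)).Adj ⟨2 * m, by omega⟩ ⟨0, by omega⟩ := by
      rw [SimpleGraph.cycleGraph_adj']
      right
      rw [Fin.sub_def]
      simp only
      rw [show 2 * m + 1 - 2 * m + 0 = 1 by omega, Nat.mod_eq_of_lt (by omega)]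
    have := f.map_adj hadj
    exact this (hlast.2 (by omega))
  · -- the blue components are too small
    have hsame : ∀ p : Option (Fin n × Fin t),
        ((f p).val < n * t ↔ (f none).val < n * t) := by
      intro p
      by_cases hp : p = none
      · rw [hp]
      · have hadj : (genFan n t).Adj p none := by
          rw [genFan, SimpleGraph.fromRel_adj]
          exact ⟨hp, Or.inr (Or.inl rfl)⟩
        have := f.map_adj hadj
        rw [SimpleGraph.compl_adj] at this
        exact not_not.1 this.2
    have hcard : (Finset.univ.image (fun p => (f p).val)).card = n * t + 1 := by
      have hinj : Function.Injective (fun p => (f p).val) := fun p q hpq => hf (Fin.ext hpq)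
      rw [Finset.card_image_of_injective _ hinj]
      simp
    by_cases h0 : (f none).val < n * t
    · have hsub : Finset.univ.image (fun p => (f p).val) ⊆ Finset.range (n * t) := by
        intro a ha
        obtain ⟨p, _, rfl⟩ := Finset.mem_image.1 ha
        exact Finset.mem_range.2 ((hsame p).2 h0)
      have := Finset.card_le_card hsub
      rw [Finset.card_range] at this
      omega
    · have hsub : Finset.univ.image (fun p => (f p).val) ⊆ Finset.Ico (n * t) (2 * (n * t)) := by
        intro a ha
        obtain ⟨p, _, rfl⟩ := Finset.mem_image.1 ha
        have h1 := (f p).isLt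
        have h2 : ¬ (f p).val < n * t := fun h => h0 ((hsame p).1 h)
        exact Finset.mem_Ico.2 ⟨by omega, by omega⟩
      have := Finset.card_le_card hsub
      rw [Nat.card_Ico] at this
      omega

theorem statement_15 (m t : ℕ) (hm : 1 ≤ m) (ht : 2 ≤ t) :
    ∃ n₀ : ℕ, ∀ n : ℕ, n₀ ≤ n →
      ramseyNumber (SimpleGraph.cycleGraph (2 * m + 1)) (genFan n t) = 2 * n * t + 1 := by
  obtain ⟨n₀, h⟩ := upper m t hm ht
  refine ⟨n₀, fun n hn => ?_⟩
  have hmem : 2 * n * t + 1 ∈ { N : ℕ | 0 < N ∧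
      arrows N (SimpleGraph.cycleGraph (2 * m + 1)) (genFan n t) } := ⟨by omega, h n hn⟩
  apply le_antisymm
  · exact Nat.sInf_le hmem
  · by_contra hlt
    push Not at hlt
    have h2 := Nat.sInf_mem ⟨_, hmem⟩
    exact lower m n t _ (by unfold ramseyNumber at hlt; omega) hm h2.2
end
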